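/- arXiv:2411.17410 — 2 statements merged into one kernel-verified Lean document; each statement's English description precedes it below -/
import Mathlib

section
/- Let f : X → S be a finite morphism of schemes and L an invertible O_X-module. Then for every point t ∈ S there exists an open neighborhood U of t such that L restricted to f⁻¹(U) is isomorphic to the structure sheaf O_{f⁻¹(U)}. -/
open AlgebraicGeometry CategoryTheory Opposite TopologicalSpace
open scoped TensorProduct

namespace Paper

/-- Restriction of a section of the structure sheaf to a smaller open subset. -/
noncomputable def res (X : Scheme) {U V : X.Opens} (h : V ≤ U) (a : Γ(X, U)) : Γ(X, V) :=
  X.presheaf.map (homOfLE h).op a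

/-- An invertible `O_X`-module (line bundle) presented by a trivializing open cover and a
multiplicative cocycle of transition functions. -/
structure LineBundle (X : Scheme) where
  ι : Type
  U : ι → X.Opens
  covers : ∀ x : X, ∃ i, x ∈ U i
  g : ∀ i j : ι, Γ(X, U i ⊓ U j)
  isUnit : ∀ i j, IsUnit (g i j)
  cocycle : ∀ i j k : ι,
    res X (inf_le_left : U i ⊓ U j ⊓ U k ≤ U i ⊓ U j) (g i j) *
      res X (le_inf (inf_le_left.trans inf_le_right) inf_le_right :
        U i ⊓ U j ⊓ U k ≤ U j ⊓ U k) (g j k) =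
    res X (le_inf (inf_le_left.trans inf_le_left) inf_le_right :
        U i ⊓ U j ⊓ U k ≤ U i ⊓ U k) (g i k)

/-- A global section of a line bundle, given in the trivializations. -/
structure LineBundle.GSection {X : Scheme} (L : LineBundle X) where
  s : ∀ i, Γ(X, L.U i)
  compat : ∀ i j, res X inf_le_left (s i) = L.g i j * res X inf_le_right (s j)

/-- A section is regular if multiplication by it is injective, i.e. all its germs are
nonzerodivisors in the stalks. -/
def LineBundle.GSection.IsRegular {X : Scheme} {L : LineBundle X} (t : L.GSection) : Prop :=
  ∀ (i : L.ι) (x : X) (hx : x ∈ L.U i),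
    X.presheaf.germ (L.U i) x hx (t.s i) ∈ nonZeroDivisors (X.presheaf.stalk x)

/-- The zero locus of a section of a line bundle. -/
def LineBundle.GSection.zeroLocus {X : Scheme} {L : LineBundle X} (t : L.GSection) : Set X :=
  {x : X | ∀ (i : L.ι) (hx : x ∈ L.U i),
    ¬ IsUnit (X.presheaf.germ (L.U i) x hx (t.s i))}

/-- An isomorphism of line bundles, given by comparing trivializations. -/
structure LineBundle.Iso {X : Scheme} (L M : LineBundle X) where
  t : ∀ (i : L.ι) (a : M.ι), Γ(X, L.U i ⊓ M.U a)
  isUnit : ∀ i a, IsUnit (t i a)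
  compat : ∀ (i j : L.ι) (a b : M.ι),
    res X (inf_le_left : (L.U i ⊓ M.U a) ⊓ (L.U j ⊓ M.U b) ≤ L.U i ⊓ M.U a) (t i a) *
      res X (le_inf (inf_le_left.trans inf_le_left) (inf_le_right.trans inf_le_left) :
        (L.U i ⊓ M.U a) ⊓ (L.U j ⊓ M.U b) ≤ L.U i ⊓ L.U j) (L.g i j) =
    res X (le_inf (inf_le_left.trans inf_le_right) (inf_le_right.trans inf_le_right) :
        (L.U i ⊓ M.U a) ⊓ (L.U j ⊓ M.U b) ≤ M.U a ⊓ M.U b) (M.g a b) *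
      res X (inf_le_right : (L.U i ⊓ M.U a) ⊓ (L.U j ⊓ M.U b) ≤ L.U j ⊓ M.U b) (t j b)

noncomputable def G {X : Scheme} {U : X.Opens} (a : Γ(X, U)) (x : X) (hx : x ∈ U) :
    X.presheaf.stalk x := X.presheaf.germ U x hx a

section
variable {X : Scheme} {U V : X.Opens} (x : X) (hx : x ∈ U)

lemma G_res (h : V ≤ U) (a : Γ(X, U)) (hx : x ∈ V) : G (res X h a) x hx = G a x (h hx) := 
  X.presheaf.germ_res_apply (homOfLE h) x hx a

lemma G_map (h : V ⟶ U) (a : Γ(X, U)) (hx : x ∈ V) :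
    G (X.presheaf.map h.op a) x hx = G a x (h.le hx) := 
  X.presheaf.germ_res_apply h x hx a

lemma G_mul (a b : Γ(X, U)) : G (a * b) x hx = G a x hx * G b x hx := map_mul _ _ _

lemma G_pow (a : Γ(X, U)) (n : ℕ) : G (a ^ n) x hx = G a x hx ^ n := map_pow _ _ _

lemma G_sum {ι : Type*} (t : Finset ι) (a : ι → Γ(X, U)) :
    G (∑ i ∈ t, a i) x hx = ∑ i ∈ t, G (a i) x hx := map_sum _ _ _

lemma G_ext {a b : Γ(X, U)} (h : ∀ x hx, G a x hx = G b x hx) : a = b :=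
  TopCat.Presheaf.section_ext X.sheaf U a b h

lemma G_isUnit {a : Γ(X, U)} : x ∈ X.basicOpen a ↔ IsUnit (G a x hx) := X.mem_basicOpen _ _ _

lemma isUnit_of_G {a : Γ(X, U)} (h : ∀ x hx, IsUnit (G a x hx)) : IsUnit a :=
  RingedSpace.isUnit_of_isUnit_germ X.toRingedSpace U a h

lemma ext_pow (hU : IsAffineOpen U) (a : Γ(X, U)) (h : Γ(X, X.basicOpen a)) :
    ∃ (n : ℕ) (y : Γ(X, U)), ∀ x (hx : x ∈ X.basicOpen a),
      G y x (X.basicOpen_le a hx) = G a x (X.basicOpen_le a hx) ^ n * G h x hx := by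
  obtain ⟨n, y, e⟩ := exists_eq_pow_mul_of_isAffineOpen X U hU a h
  refine ⟨n, y, fun x hx => ?_⟩
  have := congrArg (fun z => G z x hx) e
  simp only [G_mul, G_pow] at this
  erw [G_map, G_map] at this
  exact this

lemma eq_pow (hU : IsAffineOpen U) (a y z : Γ(X, U)) 
    (h : ∀ x (hx : x ∈ X.basicOpen a), G y x (X.basicOpen_le a hx) = G z x (X.basicOpen_le a hx)) :
    ∃ n : ℕ, a ^ n * y = a ^ n * z := by
  refine exists_of_res_eq_of_qcqs hU.isCompact hU.isQuasiSeparated (G_ext fun x hx => ?_)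
  erw [G_map, G_map]
  exact h x hx

lemma glue {ι : Type*} (W : X.Opens) (B : ι → X.Opens) (hB : ∀ i, B i ≤ W)
    (hc : ∀ x ∈ W, ∃ i, x ∈ B i) (s : ∀ i, Γ(X, B i))
    (h : ∀ i j x (hi : x ∈ B i) (hj : x ∈ B j), G (s i) x hi = G (s j) x hj) :
    ∃ t : Γ(X, W), ∀ i x (hi : x ∈ B i), G t x (hB i hi) = G (s i) x hi := by
  obtain ⟨t, ht, -⟩ := X.sheaf.existsUnique_gluing' B W (fun i => homOfLE (hB i))
    (fun x hx => by obtain ⟨i, hi⟩ := hc x hx; exact Opens.mem_iSup.2 ⟨i, hi⟩) s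
    (fun i j => G_ext fun x hx => by
      erw [G_map, G_map]
      exact h i j x hx.1 hx.2)
  refine ⟨t, fun i x hi => ?_⟩
  rw [← ht i]
  exact (G_map x _ t hi).symm

end

lemma LineBundle.coc {X : Scheme} (L : LineBundle X) (i j k : L.ι) (x : X)
    (hi : x ∈ L.U i) (hj : x ∈ L.U j) (hk : x ∈ L.U k) :
    G (L.g i j) x ⟨hi, hj⟩ * G (L.g j k) x ⟨hj, hk⟩ = G (L.g i k) x ⟨hi, hk⟩ := by
  have hx : x ∈ L.U i ⊓ L.U j ⊓ L.U k := ⟨⟨hi, hj⟩, hk⟩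
  have := congrArg (fun z => G z x hx) (L.cocycle i j k)
  simpa only [G_mul, G_res] using this

lemma LineBundle.G_unit {X : Scheme} (L : LineBundle X) (i j : L.ι) (x : X) (h) :
    IsUnit (G (L.g i j) x h) := (L.isUnit i j).map _

lemma finite_cover {X : Scheme} (L : LineBundle X) {V : X.Opens} (hV : IsAffineOpen V) :
    ∃ (n : ℕ) (b : Fin n → Γ(X, V)) (c : Fin n → L.ι), (∀ m, X.basicOpen (b m) ≤ L.U (c m)) ∧
      ∀ x ∈ V, ∃ m, x ∈ X.basicOpen (b m) := by
  have : ∀ x : V, ∃ (i : L.ι) (b : Γ(X, V)), X.basicOpen b ≤ L.U i ∧ x.1 ∈ X.basicOpen b := by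
    intro x
    obtain ⟨i, hi⟩ := L.covers x
    obtain ⟨b, h1, h2⟩ := hV.exists_basicOpen_le ⟨x.1, hi⟩ x.2
    exact ⟨i, b, h1, h2⟩
  choose i b h1 h2 using this
  obtain ⟨t, ht⟩ := hV.isCompact.elim_finite_subcover (fun x => (X.basicOpen (b x) : Set X))
    (fun x => (X.basicOpen (b x)).isOpen) (fun x hx => Set.mem_iUnion.2 ⟨⟨x, hx⟩, h2 ⟨x, hx⟩⟩)
  refine ⟨t.card, fun m => b (t.equivFin.symm m), fun m => i (t.equivFin.symm m), fun m => h1 _, ?_⟩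
  intro x hx
  have := ht hx
  simp only [Set.mem_iUnion] at this
  obtain ⟨y, hy, hxy⟩ := this
  exact ⟨t.equivFin ⟨y, hy⟩, by simpa using hxy⟩

lemma extend {X : Scheme} (L : LineBundle X) {V : X.Opens} (hV : IsAffineOpen V) (a : Γ(X, V))
    (i : L.ι) (ha : X.basicOpen a ≤ L.U i) :
    ∃ s : ∀ j, Γ(X, V ⊓ L.U j), 
      (∀ j k x (hx : x ∈ V) (hj : x ∈ L.U j) (hk : x ∈ L.U k),
        G (L.g j k) x ⟨hj, hk⟩ * G (s k) x ⟨hx, hk⟩ = G (s j) x ⟨hx, hj⟩) ∧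
      ∀ j x (hx : x ∈ V) (hj : x ∈ L.U j), IsUnit (G (s j) x ⟨hx, hj⟩) ↔ x ∈ X.basicOpen a := by
  obtain ⟨n, b, c, hb, hcov⟩ := finite_cover L hV
  have hbV : ∀ m, X.basicOpen (b m) ≤ V := fun m => X.basicOpen_le _
  have key : ∀ m, ∃ (N : ℕ) (y : Γ(X, X.basicOpen (b m))), ∀ x (hm : x ∈ X.basicOpen (b m))
      (hx : x ∈ X.basicOpen a),
      G y x hm = G a x (hbV m hm) ^ N * G (L.g (c m) i) x ⟨hb m hm, ha hx⟩ := by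
    intro m
    have hle : X.basicOpen (res X (hbV m) a) ≤ X.basicOpen a := by
      rw [res, X.basicOpen_res]; exact inf_le_right
    obtain ⟨N, y, hy⟩ := ext_pow (hV.basicOpen (b m)) (res X (hbV m) a)
      (res X (le_inf ((X.basicOpen_le _).trans (hb m)) (hle.trans ha)) (L.g (c m) i))
    refine ⟨N, y, fun x hm hx => ?_⟩
    have := hy x (by rw [res, X.basicOpen_res]; exact ⟨hm, hx⟩)
    simpa only [G_res] using this
  choose N y hy using key
  -- uniform exponent
  let M := ∑ m, N m
  have hM : ∀ m, N m ≤ M := fun m => Finset.single_le_sum (fun _ _ => Nat.zero_le _) (Finset.mem_univ m)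
  let z : ∀ m, Γ(X, X.basicOpen (b m)) := fun m => res X (hbV m) a ^ (M - N m) * y m
  have hz : ∀ m x (hm : x ∈ X.basicOpen (b m)) (hx : x ∈ X.basicOpen a),
      G (z m) x hm = G a x (hbV m hm) ^ M * G (L.g (c m) i) x ⟨hb m hm, ha hx⟩ := by
    intro m x hm hx
    simp only [z, G_mul, G_pow, G_res, hy m x hm hx]
    rw [← mul_assoc, ← pow_add, Nat.sub_add_cancel (hM m)]
  have key2 : ∀ m m', ∃ K : ℕ, ∀ x (hm : x ∈ X.basicOpen (b m)) (hm' : x ∈ X.basicOpen (b m')),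
      G a x (hbV m hm) ^ K * (G (L.g (c m) (c m')) x ⟨hb m hm, hb m' hm'⟩ * G (z m') x hm') =
      G a x (hbV m hm) ^ K * G (z m) x hm := by
    intro m m'
    have hD : X.basicOpen (b m * b m') = X.basicOpen (b m) ⊓ X.basicOpen (b m') := X.basicOpen_mul _ _
    have hDa : IsAffineOpen (X.basicOpen (b m) ⊓ X.basicOpen (b m')) := hD ▸ hV.basicOpen _
    obtain ⟨K, hK⟩ := eq_pow hDa (res X (inf_le_left.trans (hbV m)) a)
      (res X (inf_le_inf (hb m) (hb m')) (L.g (c m) (c m')) * res X inf_le_right (z m'))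
      (res X inf_le_left (z m)) (by
        intro x hx
        have hx1 := X.basicOpen_le _ hx
        have hxa : x ∈ X.basicOpen a := by
          rw [res, X.basicOpen_res] at hx; exact hx.2
        simp only [G_mul, G_res]
        rw [hz m x hx1.1 hxa, hz m' x hx1.2 hxa, ← L.coc (c m) (c m') i x (hb m hx1.1) (hb m' hx1.2) (ha hxa)]
        ring)
    refine ⟨K, fun x hm hm' => ?_⟩
    have hmm : x ∈ X.basicOpen (b m) ⊓ X.basicOpen (b m') := ⟨hm, hm'⟩
    have := congrArg (fun z => G z x hmm) hK
    simpa only [G_mul, G_res, G_pow] using this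
  choose K hK using key2
  let Q := ∑ m, ∑ m', K m m'
  have hQ : ∀ m m', K m m' ≤ Q := fun m m' => 
    (Finset.single_le_sum (f := fun m' => K m m') (fun _ _ => Nat.zero_le _) (Finset.mem_univ m')).trans
    (Finset.single_le_sum (f := fun m => ∑ m', K m m') (fun _ _ => Nat.zero_le _) (Finset.mem_univ m))
  let w : ∀ m, Γ(X, X.basicOpen (b m)) := fun m => res X (hbV m) a ^ (Q + 1) * z m
  have hw : ∀ m x (hm : x ∈ X.basicOpen (b m)), G (w m) x hm = G a x (hbV m hm) ^ (Q + 1) * G (z m) x hm := by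
    intro m x hm
    simp only [w, G_mul, G_pow, G_res]
  have hww : ∀ m m' x (hm : x ∈ X.basicOpen (b m)) (hm' : x ∈ X.basicOpen (b m')),
      G (L.g (c m) (c m')) x ⟨hb m hm, hb m' hm'⟩ * G (w m') x hm' = G (w m) x hm := by
    intro m m' x hm hm'
    rw [hw, hw]
    obtain ⟨d, hd⟩ := Nat.exists_eq_add_of_le (hQ m m')
    have := hK m m' x hm hm'
    rw [hd]
    linear_combination (G a x (hbV m hm)) ^ (d + 1) * this
  have hwu : ∀ m x (hm : x ∈ X.basicOpen (b m)), IsUnit (G (w m) x hm) ↔ x ∈ X.basicOpen a := by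
    intro m x hm
    constructor
    · intro h
      rw [hw, pow_succ', mul_assoc] at h
      exact (G_isUnit x (hbV m hm)).2 (isUnit_of_mul_isUnit_left h)
    · intro h
      have h' := (G_isUnit x (hbV m hm)).1 h
      rw [hw, hz m x hm h]
      exact (h'.pow _).mul ((h'.pow _).mul (L.G_unit _ _ _ _))
  have key3 : ∀ j, ∃ s : Γ(X, V ⊓ L.U j), ∀ m x (hx : x ∈ (V ⊓ L.U j) ⊓ X.basicOpen (b m)),
      G s x hx.1 = G (L.g j (c m)) x ⟨hx.1.2, hb m hx.2⟩ * G (w m) x hx.2 := by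
    intro j
    obtain ⟨s, hs⟩ := glue (V ⊓ L.U j) (fun m => (V ⊓ L.U j) ⊓ X.basicOpen (b m)) (fun m => inf_le_left)
      (fun x hx => by obtain ⟨m, hm⟩ := hcov x hx.1; exact ⟨m, hx, hm⟩)
      (fun m => res X (le_inf (inf_le_left.trans inf_le_right) (inf_le_right.trans (hb m)))
        (L.g j (c m)) * res X inf_le_right (w m)) (by
        intro m m' x hm hm'
        simp only [G_mul, G_res]
        rw [← hww m m' x hm.2 hm'.2, ← L.coc j (c m) (c m') x hm.1.2 (hb m hm.2) (hb m' hm'.2)]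
        ring)
    refine ⟨s, fun m x hx => ?_⟩
    have := hs m x hx
    simpa only [G_mul, G_res] using this
  choose s hs using key3
  refine ⟨s, ?_, ?_⟩
  · intro j k x hx hj hk
    obtain ⟨m, hm⟩ := hcov x hx
    rw [hs j m x ⟨⟨hx, hj⟩, hm⟩, hs k m x ⟨⟨hx, hk⟩, hm⟩, ← L.coc j k (c m) x hj hk (hb m hm)]
    ring
  · intro j x hx hj
    obtain ⟨m, hm⟩ := hcov x hx
    rw [hs j m x ⟨⟨hx, hj⟩, hm⟩, IsUnit.mul_iff, hwu]
    exact ⟨fun h => h.2, fun h => ⟨L.G_unit _ _ _ _, h⟩⟩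

/-- Let `f : X → S` be a finite morphism of schemes and `L` an invertible
`O_X`-module.  Then for every point `t ∈ S` there exists an open neighbourhood `U` of `t`
such that `L` restricted to `f⁻¹(U)` is trivial, i.e. `L` admits a unit trivializing section
over `f⁻¹(U)` (a family of units `s i` on `f⁻¹U ⊓ U i` transforming the cocycle of `L` into a
coboundary). -/
theorem stmt_8 {X S : Scheme} (f : X ⟶ S) [IsFinite f] (L : Paper.LineBundle X) (t : S) :
    ∃ U : S.Opens, t ∈ U ∧
      ∃ s : ∀ i : L.ι, Γ(X, f ⁻¹ᵁ U ⊓ L.U i),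
        (∀ i, IsUnit (s i)) ∧
        ∀ i j : L.ι,
          Paper.res X (inf_le_right : f ⁻¹ᵁ U ⊓ (L.U i ⊓ L.U j) ≤ L.U i ⊓ L.U j) (L.g i j) *
            Paper.res X (le_inf inf_le_left (inf_le_right.trans inf_le_right) :
              f ⁻¹ᵁ U ⊓ (L.U i ⊓ L.U j) ≤ f ⁻¹ᵁ U ⊓ L.U j) (s j) =
          Paper.res X (le_inf inf_le_left (inf_le_right.trans inf_le_left) :
              f ⁻¹ᵁ U ⊓ (L.U i ⊓ L.U j) ≤ f ⁻¹ᵁ U ⊓ L.U i) (s i) := by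
  obtain ⟨W, hW, htW, -⟩ := exists_isAffineOpen_mem_and_subset (x := t) (U := ⊤) trivial
  have hV : IsAffineOpen (f ⁻¹ᵁ W) := hW.preimage f
  have hfin : (f ⁻¹' {t}).Finite := f.finite_preimage_singleton t
  have hdis := isDiscrete_iff_forall_mem_exists_isOpen.1 (f.isDiscrete_preimage_singleton t)
  have h1 : ∀ p : (f ⁻¹' {t} : Set X), ∃ (i : L.ι) (a : Γ(X, f ⁻¹ᵁ W)), X.basicOpen a ≤ L.U i ∧
      ∀ q : (f ⁻¹' {t} : Set X), q.1 ∈ X.basicOpen a ↔ q = p := by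
    rintro ⟨p, hp⟩
    obtain ⟨O, hO, hOp⟩ := hdis p hp
    obtain ⟨i, hi⟩ := L.covers p
    have hpO : p ∈ O := by
      have : p ∈ O ∩ f ⁻¹' {t} := by rw [hOp]; rfl
      exact this.1
    have hpW : p ∈ f ⁻¹ᵁ W := by
      have : f p = t := hp
      show f p ∈ W
      rwa [this]
    obtain ⟨a, ha1, ha2⟩ := hV.exists_basicOpen_le (V := L.U i ⊓ ⟨O, hO⟩) ⟨p, ⟨hi, hpO⟩⟩ hpW
    refine ⟨i, a, ha1.trans inf_le_left, fun q => ⟨fun hq => ?_, fun hq => ?_⟩⟩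
    · have : q.1 ∈ O ∩ f ⁻¹' {t} := ⟨(ha1 hq).2, q.2⟩
      rw [hOp] at this
      exact Subtype.ext this
    · rw [hq]; exact ha2
  choose i a hai haq using h1
  choose s hs1 hs2 using fun p => extend L hV (a p) (i p) (hai p)
  have : Fintype (f ⁻¹' {t} : Set X) := hfin.fintype
  classical
  let σ : ∀ j, Γ(X, f ⁻¹ᵁ W ⊓ L.U j) := fun j => ∑ p, s p j
  have hσG : ∀ j x hx, G (σ j) x hx = ∑ p, G (s p j) x hx := fun j x hx =>
    G_sum x hx Finset.univ fun p => s p j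
  have hσ : ∀ j k x (hx : x ∈ f ⁻¹ᵁ W) (hj : x ∈ L.U j) (hk : x ∈ L.U k),
      G (L.g j k) x ⟨hj, hk⟩ * G (σ k) x ⟨hx, hk⟩ = G (σ j) x ⟨hx, hj⟩ := by
    intro j k x hx hj hk
    refine (congrArg _ (hσG k x ⟨hx, hk⟩)).trans (Eq.trans ?_ (hσG j x ⟨hx, hj⟩).symm)
    rw [Finset.mul_sum]
    exact Finset.sum_congr rfl fun p _ => hs1 p j k x hx hj hk
  let O : X.Opens := ⨆ j, X.basicOpen (σ j)
  have hfO : ∀ x, f x = t → x ∈ O := by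
    intro x hx
    obtain ⟨j, hj⟩ := L.covers x
    have hxW : x ∈ f ⁻¹ᵁ W := by
      show f x ∈ W
      rwa [hx]
    have hxj : x ∈ f ⁻¹ᵁ W ⊓ L.U j := ⟨hxW, hj⟩
    refine Opens.mem_iSup.2 ⟨j, (G_isUnit x hxj).2 ?_⟩
    let p : (f ⁻¹' {t} : Set X) := ⟨x, hx⟩
    rw [hσG, ← Finset.add_sum_erase _ _ (Finset.mem_univ p)]
    have hu : IsUnit (G (s p j) x ⟨hxW, hj⟩) := (hs2 p j x hxW hj).2 ((haq p p).2 rfl)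
    have hn : ∑ q ∈ Finset.univ.erase p, G (s q j) x ⟨hxW, hj⟩ ∈
        IsLocalRing.maximalIdeal (X.presheaf.stalk x) := by
      refine Ideal.sum_mem _ fun q hq => ?_
      rw [IsLocalRing.mem_maximalIdeal, mem_nonunits_iff, hs2 q j x hxW hj]
      intro h
      exact Finset.ne_of_mem_erase hq ((haq q p).1 h).symm
    by_contra hc
    have hc' := (IsLocalRing.mem_maximalIdeal _).2 hc
    exact (IsLocalRing.mem_maximalIdeal _).1 ((Ideal.add_mem_iff_left _ hn).1 hc') hu
  have hcl : IsClosed (f '' (O : Set X)ᶜ) := f.isClosedMap _ O.isOpen.isClosed_compl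
  let U : S.Opens := ⟨(f '' (O : Set X)ᶜ)ᶜ, hcl.isOpen_compl⟩
  have hUO : ∀ x ∈ f ⁻¹ᵁ U, x ∈ O := by
    intro x hx
    by_contra h
    exact hx ⟨x, h, rfl⟩
  have hOW : O ≤ f ⁻¹ᵁ W := iSup_le fun j => (X.basicOpen_le _).trans inf_le_left
  refine ⟨U, ?_, fun j => res X (inf_le_inf_right _ (fun x hx => hOW (hUO x hx))) (σ j), ?_, ?_⟩
  · rintro ⟨x, hx, hxt⟩
    exact hx (hfO x hxt)
  · intro j
    refine isUnit_of_G fun x hx => ?_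
    rw [G_res]
    have hxO := hUO x hx.1
    obtain ⟨k, hk⟩ := Opens.mem_iSup.1 hxO
    have hk1 := X.basicOpen_le _ hk
    rw [← hσ j k x (hOW hxO) hx.2 hk1.2]
    exact (L.G_unit _ _ _ _).mul ((G_isUnit x hk1).1 hk)
  · intro j k
    refine G_ext fun x hx => ?_
    simp only [G_mul, G_res]
    exact hσ j k x (hOW (hUO x hx.1)) hx.2.1 hx.2.2
end Paper
end

section
/- Let f : X → S be a surjective projective morphism of Noetherian schemes of pure relative dimension d ≥ 1 with S affine, and let L be an f-very ample invertible O_X-module. Then there exists an integer n₀ > 0 such that for all n ≥ n₀ there is a regular global section s of L^{⊗n} with Z(s) → S of pure relative dimension d − 1. -/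
open AlgebraicGeometry CategoryTheory Opposite TopologicalSpace
open scoped TensorProduct

namespace Paper

/-- `f` is of pure relative dimension `d`: every irreducible component of every
(set-theoretic) fiber of `f` has dimension `d`. -/
def PureRelativeDimension {X S : Scheme} (f : X ⟶ S) (d : ℕ) : Prop :=
  ∀ s : S, ∀ C ∈ irreducibleComponents (↥(f.base ⁻¹' {s} : Set X)),
    topologicalKrullDim (↥C) = (d : WithBot ℕ∞)

/-- A global section of the `n`-th tensor power `L^{⊗n}` over the open subset `V`,
presented in the trivializations of `L`. -/
structure LineBundle.PowSectionOn {X : Scheme} (L : LineBundle X) (n : ℕ) (V : X.Opens) where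
  s : ∀ i : L.ι, Γ(X, V ⊓ L.U i)
  compat : ∀ i j : L.ι,
    res X (le_inf inf_le_left (inf_le_right.trans inf_le_left) :
        V ⊓ (L.U i ⊓ L.U j) ≤ V ⊓ L.U i) (s i) =
      res X (inf_le_right : V ⊓ (L.U i ⊓ L.U j) ≤ L.U i ⊓ L.U j) (L.g i j) ^ n *
        res X (le_inf inf_le_left (inf_le_right.trans inf_le_right) :
          V ⊓ (L.U i ⊓ L.U j) ≤ V ⊓ L.U j) (s j)

/-- The locus where a section of `L^{⊗n}` over `V` is invertible. -/
def LineBundle.PowSectionOn.unitLocus {X : Scheme} {L : LineBundle X} {n : ℕ} {V : X.Opens}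
    (t : L.PowSectionOn n V) : Set X :=
  {x : X | ∃ (i : L.ι) (h1 : x ∈ V) (h2 : x ∈ L.U i),
    IsUnit (X.presheaf.germ (V ⊓ L.U i) x ⟨h1, h2⟩ (t.s i))}

/-- The zero locus of a section of `L^{⊗n}` over `V`. -/
def LineBundle.PowSectionOn.zeroLocus {X : Scheme} {L : LineBundle X} {n : ℕ} {V : X.Opens}
    (t : L.PowSectionOn n V) : Set X :=
  {x : X | x ∈ V ∧ ∀ (i : L.ι) (h1 : x ∈ V) (h2 : x ∈ L.U i),
    ¬ IsUnit (X.presheaf.germ (V ⊓ L.U i) x ⟨h1, h2⟩ (t.s i))}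

/-- A section of `L^{⊗n}` over `V` is regular if all of its germs are nonzerodivisors. -/
def LineBundle.PowSectionOn.IsRegular {X : Scheme} {L : LineBundle X} {n : ℕ} {V : X.Opens}
    (t : L.PowSectionOn n V) : Prop :=
  ∀ (i : L.ι) (x : X) (h1 : x ∈ V) (h2 : x ∈ L.U i),
    X.presheaf.germ (V ⊓ L.U i) x ⟨h1, h2⟩ (t.s i) ∈
      nonZeroDivisors (X.presheaf.stalk x)

/-- `L` is relatively ample for `f : X → S`: each point of `X` has an affine open
neighbourhood of the form `X_t` (the invertibility locus of a section `t` of a positive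
power of `L` over the preimage of an affine open of `S`). -/
def IsRelativelyAmple {X S : Scheme} (f : X ⟶ S) (L : LineBundle X) : Prop :=
  ∀ x : X, ∃ W : S.Opens, IsAffineOpen W ∧ f.base x ∈ W ∧
    ∃ n : ℕ, 0 < n ∧ ∃ t : L.PowSectionOn n (f ⁻¹ᵁ W),
      ∃ ho : IsOpen t.unitLocus, x ∈ t.unitLocus ∧ IsAffineOpen ⟨t.unitLocus, ho⟩

/-- A projective morphism: a proper morphism admitting a relatively ample invertible
module. -/
def IsProjectiveMorphism {X S : Scheme} (f : X ⟶ S) : Prop :=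
  IsProper f ∧ ∃ L : LineBundle X, IsRelativelyAmple f L

section P1

def GD (R B : Type*) [CommRing R] [CommRing B] [Algebra R B] (φ : B) : Prop :=
  ∀ q : Ideal B, q.IsPrime → φ ∉ q → ∀ p : Ideal R, p.IsPrime → p ≤ q.under R →
    ∃ q₁ : Ideal B, q₁ ≤ q ∧ q₁.IsPrime ∧ q₁.under R = p

lemma GD.of_flat_away {R B : Type*} [CommRing R] [CommRing B] [Algebra R B] (φ : B)
    [Module.Flat R (Localization.Away φ)] : GD R B φ := by
  intro q hq hφ p hp hle
  have hdisj : Disjoint (Submonoid.powers φ : Set B) (q : Set B) :=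
    (Ideal.disjoint_powers_iff_notMem φ hq.isRadical).mpr hφ
  let Q : Ideal (Localization.Away φ) := q.map (algebraMap B _)
  have hQ : Q.IsPrime := IsLocalization.isPrime_of_isPrime_disjoint (.powers φ) _ q hq hdisj
  have hQq : Q.under B = q := IsLocalization.under_map_of_isPrime_disjoint (.powers φ) _ hq hdisj
  have : Q.LiesOver (q.under R) := ⟨by rw [← hQq, Ideal.under_under]⟩
  have : (q.under R).IsPrime := inferInstance
  obtain ⟨P, hPQ, hP, hl⟩ := Ideal.exists_ideal_le_liesOver_of_le (p := p) (q := q.under R) Q hle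
  refine ⟨P.under B, ?_, inferInstance, ?_⟩
  · rw [← hQq]; exact Ideal.comap_mono hPQ
  · rw [Ideal.under_under]; exact hl.over.symm

lemma GD.trans {R B C : Type*} [CommRing R] [CommRing B] [CommRing C] [Algebra R B] [Algebra B C]
    [Algebra R C] [IsScalarTower R B C] {φ : B} {ψ : C} (h1 : GD R B φ) (h2 : GD B C ψ) :
    GD R C (algebraMap B C φ * ψ) := by
  intro q hq hn p hp hle
  have hφ : φ ∉ q.under B := fun h => hn (q.mul_mem_right _ h)
  have hψ : ψ ∉ q := fun h => hn (q.mul_mem_left _ h)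
  obtain ⟨q1, h1q, h1p, h1e⟩ := h1 (q.under B) inferInstance hφ p hp
    (by rwa [Ideal.under_under])
  obtain ⟨q2, h2q, h2p, h2e⟩ := h2 q hq hψ q1 h1p h1q
  exact ⟨q2, h2q, h2p, by rw [← Ideal.under_under (B := B), h2e, h1e]⟩

lemma exists_GD_finite (R B : Type*) [CommRing R] [CommRing B] [Algebra R B] [IsDomain R]
    [IsNoetherianRing R] [Module.Finite R B] : ∃ r : R, r ≠ 0 ∧ GD R B (algebraMap R B r) := by
  have : Module.FinitePresentation R B := Module.finitePresentation_of_finite R B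
  obtain ⟨r, hr, hf, -⟩ := Module.FinitePresentation.exists_free_localizedModule_powers
    (nonZeroDivisors R) (LocalizedModule.mkLinearMap (nonZeroDivisors R) B) (FractionRing R)
  refine ⟨r, nonZeroDivisors.ne_zero hr, ?_⟩
  have h1 : Module.Flat R (LocalizedModule.Away r B) :=
    Module.Flat.trans R (Localization (.powers r)) _
  have h2 : IsLocalizedModule (Submonoid.powers r) (IsScalarTower.toAlgHom R B
    (Localization.Away (algebraMap R B r))).toLinearMap := by
    rw [isLocalizedModule_iff_isLocalization]
    rw [Algebra.algebraMapSubmonoid_powers]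
    infer_instance
  have h3 : Module.Flat R (Localization.Away (algebraMap R B r)) :=
    Module.Flat.of_linearEquiv (IsLocalizedModule.iso (Submonoid.powers r) (IsScalarTower.toAlgHom R B
    (Localization.Away (algebraMap R B r))).toLinearMap).symm
  exact GD.of_flat_away _

lemma GD.of_away {C B : Type*} [CommRing C] [CommRing B] [Algebra C B] [IsDomain B]
    (hinj : Function.Injective (algebraMap C B)) (y : C) (hy : algebraMap C B y ≠ 0)
    (key : ∀ b : B, ∃ n : ℕ, ∃ c : C, algebraMap C B c = algebraMap C B y ^ n * b) :
    GD C B (algebraMap C B y) := by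
  set y' := algebraMap C B y with hy'
  have hloc : IsLocalization.Away y (Localization.Away y') := by
    have hu : ∀ n : ℕ, IsUnit (algebraMap B (Localization.Away y') (y' ^ n)) := fun n =>
      IsLocalization.map_units (M := .powers y') _ ⟨y' ^ n, n, rfl⟩
    refine ⟨⟨?_, ?_, ?_⟩⟩
    · rintro ⟨_, n, rfl⟩
      rw [IsScalarTower.algebraMap_apply C B (Localization.Away y')]
      have := hu n
      rwa [hy', ← map_pow] at this
    · intro z
      obtain ⟨⟨b, ⟨_, m, rfl⟩⟩, hb⟩ := IsLocalization.surj (Submonoid.powers y') z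
      obtain ⟨n, c, hn⟩ := key b
      refine ⟨(c, ⟨_, n + m, rfl⟩), ?_⟩
      simp only [IsScalarTower.algebraMap_apply C B (Localization.Away y')] at hb ⊢
      rw [hn, map_pow, ← hy', pow_add, map_mul, map_mul, ← hb]; ring
    · intro a b hab
      refine ⟨1, ?_⟩
      simp only [IsScalarTower.algebraMap_apply C B (Localization.Away y')] at hab
      have := IsLocalization.injective (M := Submonoid.powers y') (Localization.Away y')
        (powers_le_nonZeroDivisors_of_noZeroDivisors hy) hab
      simpa using hinj this
  have hflat2 : Module.Flat C (Localization.Away y') :=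
    IsLocalization.flat _ (Submonoid.powers y)
  exact GD.of_flat_away _

lemma exists_GD (R B : Type*) [CommRing R] [CommRing B] [Algebra R B] [IsDomain R] [IsDomain B]
    [IsNoetherianRing R] [FaithfulSMul R B] [Algebra.FiniteType R B] : ∃ φ : B, φ ≠ 0 ∧ GD R B φ := by
  obtain ⟨s, hs⟩ := (Algebra.FiniteType.out : (⊤ : Subalgebra R B).FG)
  have halg0 : Algebra.IsAlgebraic (Algebra.adjoin R (s : Set B)) B := by
    rw [hs]
    exact ⟨fun x => isAlgebraic_algebraMap (⟨x, trivial⟩ : (⊤ : Subalgebra R B))⟩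
  obtain ⟨t, hts, ht⟩ := exists_isTranscendenceBasis_subset (R := R) (s : Set B)
  have hfin : Finite t := (s.finite_toSet.subset hts).to_subtype
  let R' := Algebra.adjoin R t
  have halg : Algebra.IsAlgebraic R' B := by
    have := ht.isAlgebraic
    rw [Subtype.range_coe] at this
    exact this
  let e : MvPolynomial t R ≃ₐ[R] R' := by
    have := ht.1.aevalEquiv
    rw [Subtype.range_coe] at this
    exact this
  have hflat : Module.Flat R R' := Module.Flat.of_linearEquiv e.toLinearEquiv.symm
  have hnoeth : IsNoetherianRing R' := isNoetherianRing_of_ringEquiv _ e.toRingEquiv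
  obtain ⟨y, hy0, hy⟩ := Algebra.IsAlgebraic.exists_integral_multiples R' s
  classical
  let B' : Subalgebra R' B := Algebra.adjoin R' (s.image (y • ·) : Set B)
  have hB'fin : Module.Finite R' B' := by
    refine (Module.Finite.iff_fg (N := Subalgebra.toSubmodule B')).mpr ?_
    apply fg_adjoin_of_finite (Finset.finite_toSet _)
    intro x hx
    simp only [Finset.coe_image, Set.mem_image] at hx
    obtain ⟨z, hz, rfl⟩ := hx
    exact hy z hz
  obtain ⟨r, hr0, hr⟩ := exists_GD_finite R' B'
  let y' : B := algebraMap R' B y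
  have hy'0 : y' ≠ 0 := by
    intro h; exact hy0 (Subtype.ext h)
  have key : ∀ b : B, ∃ n : ℕ, y' ^ n * b ∈ B' := by
    have hy'B : y' ∈ B' := B'.algebraMap_mem y
    intro b
    have hb : b ∈ Algebra.adjoin R (s : Set B) := hs ▸ trivial
    induction hb using Algebra.adjoin_induction with
    | mem x hx =>
      refine ⟨1, Algebra.subset_adjoin ?_⟩
      simp only [Finset.coe_image, Set.mem_image]
      exact ⟨x, hx, by simp [y', Algebra.smul_def]⟩
    | algebraMap a => exact ⟨0, by
        simpa [← IsScalarTower.algebraMap_apply R R' B] using B'.algebraMap_mem (algebraMap R R' a)⟩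
    | add x z _ _ hx hz =>
      obtain ⟨n, hn⟩ := hx
      obtain ⟨m, hm⟩ := hz
      refine ⟨n + m, ?_⟩
      have : y' ^ (n + m) * (x + z) = y' ^ m * (y' ^ n * x) + y' ^ n * (y' ^ m * z) := by ring
      rw [this]
      exact B'.add_mem (B'.mul_mem (B'.pow_mem hy'B _) hn) (B'.mul_mem (B'.pow_mem hy'B _) hm)
    | mul x z _ _ hx hz =>
      obtain ⟨n, hn⟩ := hx
      obtain ⟨m, hm⟩ := hz
      refine ⟨n + m, ?_⟩
      have : y' ^ (n + m) * (x * z) = (y' ^ n * x) * (y' ^ m * z) := by ring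
      rw [this]
      exact B'.mul_mem hn hm
  have g3 : GD B' B (algebraMap B' B (algebraMap R' B' y)) := by
    refine GD.of_away Subtype.val_injective _ ?_ ?_
    · exact hy'0
    · intro b
      obtain ⟨n, hn⟩ := key b
      exact ⟨n, ⟨_, hn⟩, rfl⟩
  have g1 : GD R R' 1 := by
    have : Module.Flat R' (Localization.Away (1:R')) := IsLocalization.flat _ (Submonoid.powers (1 : R'))
    have : Module.Flat R (Localization.Away (1:R')) := Module.Flat.trans R R' _
    exact GD.of_flat_away _
  refine ⟨_, ?_, g1.trans (hr.trans g3)⟩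
  simp only [map_one, one_mul]
  refine mul_ne_zero ?_ hy'0
  intro h
  exact hr0 (Subtype.ext h)


end P1

section P2
open Polynomial

/-- prime is minimal in its fibre -/
def MinFib (A : Type*) {B : Type*} [CommRing A] [CommRing B] [Algebra A B] (q : Ideal B) : Prop :=
  ∀ q' : Ideal B, q'.IsPrime → q' ≤ q → (∀ a : A, algebraMap A B a ∈ q → algebraMap A B a ∈ q') →
    q' = q

def AlgAt (A : Type*) {B : Type*} [CommRing A] [CommRing B] [Algebra A B] (q : Ideal B) (b : B) :
    Prop :=
  ∃ p : A[X], (∃ i, algebraMap A B (p.coeff i) ∉ q) ∧ aeval b p ∈ q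

lemma eval_ne_zero_of_natDegree_lt {E : Type*} [CommRing E] [IsDomain E] (T : E[X]) :
    ∀ (m : ℕ) (Q : E[X][X]), Q.natDegree ≤ m → Q ≠ 0 →
      (∀ i, (Q.coeff i).natDegree < T.natDegree) → Q.eval T ≠ 0 := by
  have aux : ∀ (Q : E[X][X]), Q.coeff 0 ≠ 0 → 
      (∀ i, (Q.coeff i).natDegree < T.natDegree) → Q.eval T ≠ 0 := by
    intro Q h0 hdeg h
    rw [← Q.divX_mul_X_add] at h
    simp only [eval_add, eval_mul, eval_X, eval_C] at h
    have hdvd : T ∣ Q.coeff 0 := ⟨- eval T Q.divX, by linear_combination h⟩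
    exact absurd (natDegree_le_of_dvd hdvd h0) (not_le.mpr (hdeg 0))
  intro m
  induction m with
  | zero =>
    intro Q hQ hQ0 hdeg
    refine aux Q ?_ hdeg
    intro h
    rw [eq_C_of_natDegree_le_zero hQ, h] at hQ0
    simp at hQ0
  | succ m ih =>
    intro Q hQ hQ0 hdeg
    by_cases h0 : Q.coeff 0 = 0
    · have hT : T ≠ 0 := by
        rintro rfl
        simpa using hdeg 0
      have h1 := Q.divX_mul_X_add
      rw [h0, C_0, add_zero] at h1
      rw [← h1, eval_mul, eval_X]
      refine mul_ne_zero (ih _ ?_ ?_ ?_) hT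
      · rw [natDegree_divX_eq_natDegree_tsub_one]; omega
      · rintro h; rw [h, zero_mul] at h1; exact hQ0 h1.symm
      · intro i; rw [coeff_divX]; exact hdeg _
    · exact aux Q h0 hdeg

/-- The dependent case, over domains. -/
lemma isAlgebraic_of_dep {k D : Type*} [CommRing k] [CommRing D] [IsDomain k] [IsDomain D]
    [Algebra k D] [FaithfulSMul k D] (u g : D) (Φ : k[X][X]) (hΦ : Φ ≠ 0)
    (h0 : Φ.eval₂ (aeval u : k[X] →ₐ[k] D).toRingHom g = 0) (n : ℕ)
    (hn : ∀ i, (Φ.coeff i).natDegree < n) (hw : IsAlgebraic k (u ^ n + g)) : IsAlgebraic k u := by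
  let E := Subalgebra.algebraicClosure k D
  by_contra hu
  have hEalg : Algebra.IsAlgebraic k E := inferInstance
  have huE : Transcendental E u := fun h => hu (h.restrictScalars k)
  let w : E := ⟨u ^ n + g, hw⟩
  have hn0 : 0 < n := (Nat.zero_le _).trans_lt (hn 0)
  let T : E[X] := C w - X ^ n
  have hT : T.natDegree = n := by
    rw [show T = -(X ^ n - C w) by simp [T], natDegree_neg, natDegree_X_pow_sub_C]
  let Q : E[X][X] := Φ.map (mapRingHom (algebraMap k E))
  have hinj : Function.Injective (algebraMap k E) := FaithfulSMul.algebraMap_injective k E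
  have hQ0 : Q ≠ 0 := (Polynomial.map_ne_zero_iff (map_injective _ hinj)).mpr hΦ
  have h1 := eval_ne_zero_of_natDegree_lt T _ Q le_rfl hQ0 (by
    intro i
    rw [hT, coeff_map, coe_mapRingHom]
    exact natDegree_map_le.trans_lt (hn i))
  apply h1
  by_contra h2
  refine huE ⟨Q.eval T, h2, ?_⟩
  have e1 : aeval u T = g := by
    simp [T, w]
  have : aeval u (Q.eval T) = Q.eval₂ (aeval u : E[X] →ₐ[E] D).toRingHom (aeval u T) := by
    exact Polynomial.hom_eval₂ Q (RingHom.id _) (aeval u : E[X] →ₐ[E] D).toRingHom T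
  rw [this, e1, Polynomial.eval₂_map]
  convert h0 using 2
  ext <;> simp

lemma algAt_iff {A B : Type*} [CommRing A] [CommRing B] [Algebra A B] (q : Ideal B) (b : B) :
    AlgAt A q b ↔ IsAlgebraic (A ⧸ q.under A) (Ideal.Quotient.mk q b) := by
  have h0 : ∀ p : A[X], aeval (Ideal.Quotient.mk q b) (p.map (Ideal.Quotient.mk (q.under A))) =
      Ideal.Quotient.mk q (aeval b p) := by
    intro p
    rw [aeval_def, eval₂_map, aeval_def, hom_eval₂]
    rfl
  have h1 : ∀ p : A[X], p.map (Ideal.Quotient.mk (q.under A)) ≠ 0 ↔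
      ∃ i, algebraMap A B (p.coeff i) ∉ q := by
    intro p
    rw [Ne, Polynomial.ext_iff, not_forall]
    simp [Ideal.Quotient.eq_zero_iff_mem, Ideal.mem_comap]
  constructor
  · rintro ⟨p, hp, hpb⟩
    refine ⟨p.map (Ideal.Quotient.mk _), (h1 p).mpr hp, ?_⟩
    rw [h0, Ideal.Quotient.eq_zero_iff_mem]; exact hpb
  · rintro ⟨p, hp, hpb⟩
    obtain ⟨p, rfl⟩ := Polynomial.map_surjective _ Ideal.Quotient.mk_surjective p
    refine ⟨p, (h1 p).mp hp, ?_⟩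
    rwa [h0, Ideal.Quotient.eq_zero_iff_mem] at hpb

instance underFaithful {A B : Type*} [CommRing A] [CommRing B] [Algebra A B] (q : Ideal B) :
    FaithfulSMul (A ⧸ q.under A) (B ⧸ q) := by
  rw [faithfulSMul_iff_algebraMap_injective]
  exact Ideal.algebraMap_quotient_injective

lemma bound_dep {A D : Type*} [CommRing A] [CommRing D] [Algebra A D] (u g : D) (Φ : A[X][X])
    (h0 : Φ.eval₂ (aeval u : A[X] →ₐ[A] D).toRingHom g = 0) (i j : ℕ) (n : ℕ)
    (hn : ∀ i, (Φ.coeff i).natDegree < n) (q : Ideal D) (hq : q.IsPrime)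
    (hc : algebraMap A D ((Φ.coeff i).coeff j) ∉ q) (hw : AlgAt A q (u ^ n + g)) : AlgAt A q u := by
  rw [algAt_iff] at hw ⊢
  refine isAlgebraic_of_dep (Ideal.Quotient.mk q u) (Ideal.Quotient.mk q g)
    (Φ.map (mapRingHom (Ideal.Quotient.mk (q.under A)))) ?_ ?_ n ?_ (by simpa using hw)
  · intro h
    have := congrArg (fun P => (P.coeff i).coeff j) h
    simp [Ideal.Quotient.eq_zero_iff_mem, Ideal.mem_comap] at this
    exact hc this
  · rw [eval₂_map]
    have := congrArg (Ideal.Quotient.mk q) h0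
    rw [hom_eval₂, map_zero] at this
    rw [← this]
    congr 1
    ext a
    · simp
    · simp
  · intro i
    rw [coeff_map, coe_mapRingHom]
    exact natDegree_map_le.trans_lt (hn i)

lemma bound_indep {A D : Type*} [CommRing A] [IsNoetherianRing A] [CommRing D] [IsDomain D]
    [Algebra A D] [FaithfulSMul A D] [Algebra.FiniteType A D] (u g : D)
    (hinj : Function.Injective (eval₂RingHom (aeval u : A[X] →ₐ[A] D).toRingHom g)) :
    ∃ φ : D, φ ≠ 0 ∧ ∀ n : ℕ, ∀ q : Ideal D, q.IsPrime → φ ∉ q → MinFib A q → 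
      ¬ AlgAt A q (u ^ n + g) := by
  have hA : IsDomain A := (FaithfulSMul.algebraMap_injective A D).isDomain
  let θ := eval₂RingHom (aeval u : A[X] →ₐ[A] D).toRingHom g
  let _ : Algebra A[X][X] D := θ.toAlgebra
  have hθ : algebraMap A[X][X] D = θ := rfl
  have : IsScalarTower A A[X][X] D := IsScalarTower.of_algebraMap_eq (by
    intro a; rw [hθ]; simp [θ, Polynomial.algebraMap_apply])
  have : FaithfulSMul A[X][X] D := (faithfulSMul_iff_algebraMap_injective _ _).mpr hinj
  have : Algebra.FiniteType A[X][X] D := Algebra.FiniteType.of_restrictScalars_finiteType A _ _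
  obtain ⟨φ, hφ0, hφ⟩ := exists_GD A[X][X] D
  refine ⟨φ, hφ0, ?_⟩
  rintro n q hq hφq hmin ⟨p, ⟨i, hi⟩, hp⟩
  let p0 := q.under A
  let P : Ideal A[X][X] := (p0.map C).map C
  have hp0 : p0.IsPrime := inferInstance
  have hP1 : (p0.map (C : A →+* A[X])).IsPrime := Ideal.isPrime_map_C_of_isPrime
  have hP : P.IsPrime := Ideal.isPrime_map_C_of_isPrime
  have hCC : ∀ a : A, algebraMap A[X][X] D (C (C a)) = algebraMap A D a := by
    intro a; rw [hθ]; simp [θ]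
  have hPq : P ≤ q.under A[X][X] := by
    rw [Ideal.map_le_iff_le_comap, Ideal.map_le_iff_le_comap]
    intro a ha
    rw [Ideal.mem_comap, Ideal.mem_comap, Ideal.mem_comap, hCC]
    exact ha
  obtain ⟨q1, hq1q, hq1, hq1e⟩ := hφ q hq hφq P hP hPq
  have hqq : q1 = q := hmin q1 hq1 hq1q (by
    intro a ha
    have : C (C a) ∈ q1.under A[X][X] := by
      rw [hq1e]
      exact Ideal.mem_map_of_mem _ (Ideal.mem_map_of_mem _ ha)
    rw [Ideal.mem_comap, hCC] at this
    exact this)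
  rw [hqq] at hq1e
  let W : A[X][X] := taylor (X ^ n) (p.map C)
  have hW : algebraMap A[X][X] D W = aeval (u ^ n + g) p := by
    rw [hθ]
    simp only [W, θ, taylor_apply, coe_eval₂RingHom, eval₂_comp, eval₂_map]
    rw [aeval_def]
    congr 1
    · ext a; simp
    · rw [eval₂_add, eval₂_X, eval₂_C]; simp [add_comm]
  have hWP : W ∈ P := by
    rw [← hq1e, Ideal.mem_comap, hW]; exact hp
  let ρ : A[X][X] →+* (A ⧸ p0)[X][X] := mapRingHom (mapRingHom (Ideal.Quotient.mk p0))
  have hρP : P ≤ RingHom.ker ρ := by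
    rw [Ideal.map_le_iff_le_comap, Ideal.map_le_iff_le_comap]
    intro a ha
    rw [Ideal.mem_comap, Ideal.mem_comap, RingHom.mem_ker]
    simp [ρ, Ideal.Quotient.eq_zero_iff_mem.mpr ha]
  have h2 : ρ W = 0 := hρP hWP
  have h3 : ρ W = taylor (X ^ n) ((p.map (Ideal.Quotient.mk p0)).map C) := by
    simp only [ρ, W, taylor_apply, coe_mapRingHom, Polynomial.map_comp, Polynomial.map_map]
    congr 1
    · congr 1
      ext a : 1
      simp
    · simp
  rw [h3] at h2
  replace h2 := taylor_injective _ (h2.trans (map_zero _).symm)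
  rw [Polynomial.map_eq_zero_iff C_injective] at h2
  have := congrArg (fun P => P.coeff i) h2
  simp [Ideal.Quotient.eq_zero_iff_mem] at this
  exact hi this

lemma bound_domain {A D : Type*} [CommRing A] [IsNoetherianRing A] [CommRing D] [IsDomain D]
    [Algebra A D] [Algebra.FiniteType A D] (u g : D) :
    ∃ φ : D, φ ≠ 0 ∧ ∃ N : ℕ, ∀ n ≥ N, ∀ q : Ideal D, q.IsPrime → φ ∉ q → MinFib A q →
      AlgAt A q (u ^ n + g) → AlgAt A q u := by
  by_cases hdep : ∃ Φ : A[X][X], Φ.eval₂ (aeval u : A[X] →ₐ[A] D).toRingHom g = 0 ∧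
      ∃ i j, algebraMap A D ((Φ.coeff i).coeff j) ≠ 0
  · obtain ⟨Φ, h0, i, j, hij⟩ := hdep
    refine ⟨_, hij, (Φ.support.sup fun i => (Φ.coeff i).natDegree) + 1, ?_⟩
    intro n hn q hq hc hmin hw
    refine bound_dep u g Φ h0 i j n ?_ q hq hc hw
    intro i
    refine lt_of_lt_of_le (Nat.lt_succ_of_le ?_) hn
    by_cases hi : i ∈ Φ.support
    · exact Finset.le_sup (f := fun i => (Φ.coeff i).natDegree) hi
    · simp [notMem_support_iff.mp hi]
  · push Not at hdep
    let A' := (⊥ : Subalgebra A D)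
    have hs : Function.Surjective (algebraMap A A') := by
      rintro ⟨x, hx⟩
      obtain ⟨a, ha⟩ := Algebra.mem_bot.mp hx
      exact ⟨a, Subtype.ext ha⟩
    have hN : IsNoetherianRing A' := isNoetherianRing_of_surjective _ _ _ hs
    have : Algebra.FiniteType A' D := Algebra.FiniteType.of_restrictScalars_finiteType A _ _
    obtain ⟨φ, hφ0, hφ⟩ := bound_indep (A := A') u g (by
      rw [injective_iff_map_eq_zero]
      intro Φ' h
      obtain ⟨Φ, rfl⟩ := Polynomial.map_surjective (mapRingHom (algebraMap A A'))
        (Polynomial.map_surjective _ hs) Φ'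
      have := hdep Φ (by
        rw [coe_eval₂RingHom, eval₂_map] at h
        rw [← h]
        congr 1
        ext a
        · simp
        · simp)
      ext i j
      simpa using this i j)
    refine ⟨φ, hφ0, 0, ?_⟩
    intro n _ q hq hφq hmin hw
    exfalso
    refine hφ n q hq hφq ?_ ?_
    · intro q' hq' hle h
      exact hmin q' hq' hle (fun a ha => h (algebraMap A A' a) ha)
    · obtain ⟨p, ⟨i, hi⟩, hp⟩ := hw
      refine ⟨p.map (algebraMap A A'), ⟨i, ?_⟩, ?_⟩
      · rw [coeff_map]; exact hi
      · rw [aeval_map_algebraMap]; exact hp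

lemma bound {A B : Type*} [CommRing A] [IsNoetherianRing A] [CommRing B]
    [Algebra A B] [Algebra.FiniteType A B] (u g : B) :
    ∃ N : ℕ, ∀ n ≥ N, ∀ q : Ideal B, q.IsPrime → MinFib A q →
      AlgAt A q (u ^ n + g) → AlgAt A q u := by
  have hB : IsNoetherianRing B := Algebra.FiniteType.isNoetherianRing A B
  suffices h : ∀ J : Ideal B, ∃ N : ℕ, ∀ n ≥ N, ∀ q : Ideal B, q.IsPrime → J ≤ q → MinFib A q →
      AlgAt A q (u ^ n + g) → AlgAt A q u by
    obtain ⟨N, hN⟩ := h ⊥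
    exact ⟨N, fun n hn q hq => hN n hn q hq bot_le⟩
  intro J
  induction J using IsNoetherian.induction with
  | hgt J ih =>
  change Ideal B at J
  by_cases hT : J = ⊤
  · exact ⟨0, fun n _ q hq hJ => absurd (top_le_iff.mp (hT ▸ hJ)) hq.ne_top⟩
  have hlt : ∀ c, c ∉ J → J < J ⊔ Ideal.span {c} := by
    intro c hc
    refine lt_of_le_of_ne le_sup_left fun h => hc ?_
    rw [h]; exact Ideal.mem_sup_right (Ideal.mem_span_singleton_self c)
  have hmem : ∀ c (q : Ideal B), J ≤ q → c ∈ q → J ⊔ Ideal.span {c} ≤ q := by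
    intro c q h1 h2
    exact sup_le h1 ((Ideal.span_singleton_le_iff_mem _).mpr h2)
  by_cases hP : Ideal.IsPrime J
  · obtain ⟨φ', hφ0, N1, hN1⟩ := bound_domain (A := A) (Ideal.Quotient.mk J u) (Ideal.Quotient.mk J g)
    obtain ⟨φ, rfl⟩ := Ideal.Quotient.mk_surjective φ'
    have hφJ : φ ∉ J := fun h => hφ0 (Ideal.Quotient.eq_zero_iff_mem.mpr h)
    obtain ⟨N2, hN2⟩ := ih _ (hlt φ hφJ)
    refine ⟨max N1 N2, fun n hn q hq hJ hmin hw => ?_⟩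
    by_cases hφq : φ ∈ q
    · exact hN2 n ((le_max_right _ _).trans hn) q hq (hmem φ q hJ hφq) hmin hw
    let q' : Ideal (B ⧸ J) := q.map (Ideal.Quotient.mk J)
    have hq'c : q'.comap (Ideal.Quotient.mk J) = q := by
      rw [Ideal.comap_map_of_surjective _ Ideal.Quotient.mk_surjective, sup_eq_left]
      intro x hx
      apply hJ
      rw [Ideal.mem_comap, Ideal.mem_bot, Ideal.Quotient.eq_zero_iff_mem] at hx
      exact hx
    have hm : ∀ b, Ideal.Quotient.mk J b ∈ q' ↔ b ∈ q := by
      intro b; rw [← Ideal.mem_comap, hq'c]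
    have hq' : q'.IsPrime := Ideal.map_isPrime_of_surjective Ideal.Quotient.mk_surjective
      (by rw [Ideal.mk_ker]; exact hJ)
    have hae : ∀ (b : B) (p : A[X]), aeval (Ideal.Quotient.mk J b) p =
        Ideal.Quotient.mk J (aeval b p) := by
      intro b p
      exact aeval_algHom_apply (Ideal.Quotient.mkₐ A J) b p
    have hAl : ∀ b, AlgAt A q' (Ideal.Quotient.mk J b) ↔ AlgAt A q b := by
      intro b
      unfold AlgAt
      simp only [hae, hm]
      simp only [← Ideal.Quotient.mk_algebraMap, hm]
    rw [← hAl]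
    refine hN1 n ((le_max_left _ _).trans hn) q' hq' (by rwa [hm]) ?_ ?_
    · intro q2 hq2 hle h
      have := hmin (q2.comap (Ideal.Quotient.mk J)) inferInstance
        (by rw [← hq'c]; exact Ideal.comap_mono hle) (by
          intro a ha
          rw [Ideal.mem_comap]
          exact h a ((hm _).mpr ha))
      rw [← hq'c] at this
      exact Ideal.comap_injective_of_surjective _ Ideal.Quotient.mk_surjective this
    · rw [← map_pow, ← map_add, hAl]; exact hw
  · rw [Ideal.isPrime_iff] at hP
    push Not at hP
    obtain ⟨a, b, hab, ha, hb⟩ := hP hT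
    obtain ⟨N1, hN1⟩ := ih _ (hlt a ha)
    obtain ⟨N2, hN2⟩ := ih _ (hlt b hb)
    refine ⟨max N1 N2, fun n hn q hq hJ hmin hw => ?_⟩
    rcases hq.mem_or_mem (hJ hab) with h | h
    · exact hN1 n ((le_max_left _ _).trans hn) q hq (hmem a q hJ h) hmin hw
    · exact hN2 n ((le_max_right _ _).trans hn) q hq (hmem b q hJ h) hmin hw


end P2

section P3

/-- Abstract data for the avoidance argument. -/
structure Av (Rt : Type*) [CommRing Rt] (X : Type*) (K : X → Type*) [∀ x, Field (K x)] where
  S : ℕ → Set Rt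
  zero_mem : ∀ n, (0 : Rt) ∈ S n
  one_mem : (1 : Rt) ∈ S 0
  add_mem : ∀ {n a b}, a ∈ S n → b ∈ S n → a + b ∈ S n
  mul_mem : ∀ {n m a b}, a ∈ S n → b ∈ S m → a * b ∈ S (n + m)
  ev : ∀ x, Rt →+* K x
  G : Set X
  k : ∀ x, Subfield (K x)
  root : ∀ x (y : K x) (m : ℕ), 0 < m → y ^ m ∈ k x → y ∈ k x
  quad : ∀ x (y : K x), y * (y + 1) ∈ k x → y ∈ k x
  bd : ∀ (a f c : Rt) (b : ℕ), ∃ N : ℕ, ∀ n ≥ N, ∀ x ∈ G, ev x f ≠ 0 →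
    (ev x a / ev x f) ^ n + ev x c / ev x f ^ b ∈ k x → ev x a / ev x f ∈ k x
  r : ℕ
  T : Fin r → Rt
  T_mem : ∀ i, T i ∈ S 1
  T_ne : ∀ x, ∃ i, ev x (T i) ≠ 0
  pos : ∀ x ∈ G, ∃ i j, ev x (T j) ≠ 0 ∧ ev x (T i) / ev x (T j) ∉ k x

namespace Av
variable {Rt : Type*} [CommRing Rt] {X : Type*} {K : X → Type*} [∀ x, Field (K x)] (V : Av Rt X K)

lemma pow_mem {n : ℕ} {a : Rt} (h : a ∈ V.S n) (m : ℕ) : a ^ m ∈ V.S (m * n) := by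
  induction m with
  | zero => simpa using V.one_mem
  | succ m ih => rw [pow_succ, Nat.succ_mul]; exact V.mul_mem ih h

lemma pow_mem' {n : ℕ} {a : Rt} (h : a ∈ V.S n) (m : ℕ) {l : ℕ} (hl : l = m * n) : a ^ m ∈ V.S l :=
  hl ▸ V.pow_mem h m

lemma mem_cast {n m : ℕ} {a : Rt} (h : a ∈ V.S n) (e : n = m) : a ∈ V.S m := e ▸ h

lemma w_list {m : ℕ} {F : Rt} (hF : F ∈ V.S m) (l : List Rt) (hl : ∀ t ∈ l, t ∈ V.S m) :
    ∃ b : ℕ, ∃ G ∈ V.S (b * m), ∀ x ∈ V.G, V.ev x F ≠ 0 → V.ev x G / V.ev x F ^ b ∈ V.k x →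
      ∀ t ∈ l, V.ev x t / V.ev x F ∈ V.k x := by
  induction l with
  | nil => exact ⟨0, 0, V.zero_mem _, by simp⟩
  | cons t l ih =>
    obtain ⟨b, G, hG, h⟩ := ih (fun t ht => hl t (List.mem_cons_of_mem _ ht))
    obtain ⟨N, hN⟩ := V.bd t F G b
    have ht := hl t (by simp)
    refine ⟨max N b, t ^ (max N b) + F ^ (max N b - b) * G, V.add_mem (V.pow_mem ht _) ?_, ?_⟩
    · refine V.mem_cast (V.mul_mem (V.pow_mem hF _) hG) ?_
      rw [← Nat.add_mul]; congr 1; omega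
    · intro x hx h0 hk
      have e : V.ev x (t ^ (max N b) + F ^ (max N b - b) * G) / V.ev x F ^ (max N b) =
          (V.ev x t / V.ev x F) ^ (max N b) + V.ev x G / V.ev x F ^ b := by
        rw [map_add, map_mul, map_pow, map_pow, add_div, div_pow]
        congr 1
        have : V.ev x F ^ (max N b) = V.ev x F ^ (max N b - b) * V.ev x F ^ b := by
          rw [← pow_add]; congr 1; omega
        rw [this, mul_div_mul_left _ _ (pow_ne_zero _ h0)]
      rw [e] at hk
      have h1 := hN _ (le_max_left _ _) x hx h0 hk
      have h2 : V.ev x G / V.ev x F ^ b ∈ V.k x := by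
        have := (V.k x).sub_mem hk ((V.k x).pow_mem h1 (max N b))
        rwa [add_sub_cancel_left] at this
      intro t' ht'
      rcases List.mem_cons.mp ht' with rfl | ht'
      · exact h1
      · exact h x hx h0 h2 t' ht'

lemma exists_w {m : ℕ} (hm : 0 < m) {F : Rt} (hF : F ∈ V.S m) :
    ∃ b : ℕ, ∃ G ∈ V.S (b * m), ∀ x ∈ V.G, V.ev x F ≠ 0 → V.ev x G / V.ev x F ^ b ∉ V.k x := by
  obtain ⟨b, G, hG, h⟩ := V.w_list hF (List.ofFn fun i => V.T i ^ m) (by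
    intro t ht
    obtain ⟨i, rfl⟩ := (List.mem_ofFn' _ _).mp ht
    exact V.pow_mem' (V.T_mem i) m (by simp))
  refine ⟨b, G, hG, fun x hx h0 hk => ?_⟩
  have h1 := h x hx h0 hk
  obtain ⟨i, j, hj, hij⟩ := V.pos x hx
  apply hij
  apply V.root x _ m hm
  have hi' := h1 (V.T i ^ m) (by rw [List.mem_ofFn']; exact ⟨i, rfl⟩)
  have hj' := h1 (V.T j ^ m) (by rw [List.mem_ofFn']; exact ⟨j, rfl⟩)
  have := (V.k x).div_mem hi' hj'
  rwa [div_div_div_cancel_right₀ h0, map_pow, map_pow, ← div_pow] at this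

lemma exists_w' {m : ℕ} (hm : 0 < m) {F : Rt} (hF : F ∈ V.S m) (A : Finset X)
    (hA : ∀ x ∈ A, V.ev x F ≠ 0) :
    ∃ b : ℕ, ∃ G ∈ V.S (b * m), (∀ x ∈ V.G, V.ev x F ≠ 0 → V.ev x G / V.ev x F ^ b ∉ V.k x) ∧
      ∀ x ∈ A, V.ev x G ≠ 0 := by
  obtain ⟨b, G, hG, h⟩ := V.exists_w hm hF
  -- sequence
  let G' : ℕ → Rt := fun j => Nat.rec G (fun j Gj => Gj * (Gj + F ^ (2 ^ j * b))) j
  have G's : ∀ j, G' (j + 1) = G' j * (G' j + F ^ (2 ^ j * b)) := fun j => rfl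
  have hG' : ∀ j, G' j ∈ V.S (2 ^ j * b * m) := by
    intro j
    induction j with
    | zero => simpa [G'] using hG
    | succ j ih =>
      rw [G's]
      exact V.mem_cast (V.mul_mem ih (V.add_mem ih (V.pow_mem hF _))) (by ring)
  have hrat : ∀ j x, V.ev x F ≠ 0 → V.ev x (G' (j+1)) / V.ev x F ^ (2 ^ (j + 1) * b) =
      (V.ev x (G' j) / V.ev x F ^ (2 ^ j * b)) * (V.ev x (G' j) / V.ev x F ^ (2 ^ j * b) + 1) := by
    intro j x hx
    rw [G's, map_mul, map_add, map_pow, pow_succ 2 j]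
    have : V.ev x F ^ (2 ^ j * b) ≠ 0 := pow_ne_zero _ hx
    rw [show 2 ^ j * 2 * b = 2 ^ j * b + 2 ^ j * b by ring, pow_add]
    field_simp
  have hnk : ∀ j, ∀ x ∈ V.G, V.ev x F ≠ 0 → V.ev x (G' j) / V.ev x F ^ (2 ^ j * b) ∉ V.k x := by
    intro j x hx h0
    induction j with
    | zero => simpa [G'] using h x hx h0
    | succ j ih =>
      intro hk
      rw [hrat j x h0] at hk
      exact ih (V.quad x _ hk)
  have hbad : ∀ x, ∃ J, ∀ j ≥ J, V.ev x F ≠ 0 → V.ev x (G' j + F ^ (2 ^ j * b)) ≠ 0 := by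
    intro x
    by_cases hx : ∃ i, V.ev x (G' i + F ^ (2 ^ i * b)) = 0
    · obtain ⟨i, hi⟩ := hx
      refine ⟨i + 1, fun j hj h0 => ?_⟩
      have hz : ∀ j ≥ i + 1, V.ev x (G' j) = 0 := by
        intro j hj
        induction j, hj using Nat.le_induction with
        | base => rw [G's, map_mul, hi, mul_zero]
        | succ j _ ih => rw [G's, map_mul, ih, zero_mul]
      rw [map_add, hz j hj, zero_add, map_pow]
      exact pow_ne_zero _ h0
    · push Not at hx
      exact ⟨0, fun j _ _ => hx j⟩
  choose J hJ using hbad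
  let j := A.sup J
  refine ⟨2 ^ j * b, G' j + F ^ (2 ^ j * b), V.add_mem (hG' j) (V.pow_mem hF _), ?_, ?_⟩
  · intro x hx h0 hk
    apply hnk j x hx h0
    rw [map_add, add_div, map_pow, div_self (pow_ne_zero _ h0)] at hk
    have := (V.k x).sub_mem hk (V.k x).one_mem
    rwa [add_sub_cancel_right] at this
  · intro x hx
    exact hJ x j (Finset.le_sup hx) (hA x hx)

lemma combine {m : ℕ} (hm : 0 < m) {F P : Rt} (hF : F ∈ V.S m) (hP : P ∈ V.S m) (A : Finset X)
    (hA : ∀ x ∈ A, V.ev x F ≠ 0) (hAP : ∀ x ∈ A, V.ev x P = 0) :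
    ∃ N : ℕ, ∀ n ≥ N, ∃ H ∈ V.S (n * m),
      (∀ x ∈ V.G, V.ev x F ≠ 0 → V.ev x H ≠ 0) ∧
      (∀ x, V.ev x F = 0 → V.ev x P ≠ 0 → V.ev x H ≠ 0) ∧ ∀ x ∈ A, V.ev x H ≠ 0 := by
  obtain ⟨b, G, hG, h, h'⟩ := V.exists_w' hm hF A hA
  obtain ⟨N, hN⟩ := V.bd P F G b
  refine ⟨max N (b + 1), fun n hn => ?_⟩
  have hnb : b + 1 ≤ n := (le_max_right _ _).trans hn
  have hnN : N ≤ n := (le_max_left _ _).trans hn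
  refine ⟨P ^ n + F ^ (n - b) * G, V.add_mem (V.pow_mem hP _) ?_, ?_, ?_, ?_⟩
  · refine V.mem_cast (V.mul_mem (V.pow_mem hF _) hG) ?_
    rw [← Nat.add_mul]; congr 1; omega
  · intro x hx h0 hz
    have e : V.ev x (P ^ n + F ^ (n - b) * G) / V.ev x F ^ n =
        (V.ev x P / V.ev x F) ^ n + V.ev x G / V.ev x F ^ b := by
      rw [map_add, map_mul, map_pow, map_pow, add_div, div_pow]
      congr 1
      have : V.ev x F ^ n = V.ev x F ^ (n - b) * V.ev x F ^ b := by
        rw [← pow_add]; congr 1; omega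
      rw [this, mul_div_mul_left _ _ (pow_ne_zero _ h0)]
    rw [hz, zero_div] at e
    have h1 := hN n hnN x hx h0 (by rw [← e]; exact (V.k x).zero_mem)
    apply h x hx h0
    have e2 : V.ev x G / V.ev x F ^ b = - (V.ev x P / V.ev x F) ^ n := by linear_combination -e
    rw [e2]
    exact (V.k x).neg_mem ((V.k x).pow_mem h1 n)
  · intro x h0 hp
    rw [map_add, map_mul, map_pow, map_pow, h0, zero_pow (by omega), zero_mul, add_zero]
    exact pow_ne_zero _ hp
  · intro x hx
    rw [map_add, map_mul, map_pow, map_pow, hAP x hx, zero_pow (by omega), zero_add]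
    exact mul_ne_zero (pow_ne_zero _ (hA x hx)) (h' x hx)

lemma exists_pow_ge (e : ℕ) (he : 2 ≤ e) (N : ℕ) : ∃ l, N ≤ e ^ l :=
  ⟨N, (Nat.lt_pow_self (by omega)).le⟩

lemma good_list (e : ℕ) (he : 2 ≤ e) (l : List (Fin V.r)) :
    ∃ k, ∃ F ∈ V.S (e ^ k), ∀ x ∈ V.G, (∃ i ∈ l, V.ev x (V.T i) ≠ 0) → V.ev x F ≠ 0 := by
  induction l with
  | nil => exact ⟨0, 0, V.zero_mem _, by simp⟩
  | cons i l ih =>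
    obtain ⟨k, F, hF, h⟩ := ih
    have hP : V.T i ^ (e ^ k) ∈ V.S (e ^ k) := V.pow_mem' (V.T_mem i) _ (by simp)
    obtain ⟨N, hN⟩ := V.combine (pow_pos (by omega) k) hF hP ∅ (by simp) (by simp)
    obtain ⟨l', hl'⟩ := exists_pow_ge e he N
    obtain ⟨H, hH, h1, h2, -⟩ := hN _ hl'
    refine ⟨l' + k, H, V.mem_cast hH (pow_add _ _ _).symm, ?_⟩
    rintro x hx ⟨j, hj, hne⟩
    by_cases h0 : V.ev x F = 0
    · rcases List.mem_cons.mp hj with rfl | hj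
      · exact h2 x h0 (by rw [map_pow]; exact pow_ne_zero _ hne)
      · exact absurd h0 (h x hx ⟨j, hj, hne⟩)
    · exact h1 x hx h0

lemma good_finset (e : ℕ) (he : 2 ≤ e) (c : ℕ) : ∀ A : Finset X, A.card = c →
    ∃ k, ∃ F ∈ V.S (e ^ k), (∀ x ∈ V.G, V.ev x F ≠ 0) ∧ ∀ x ∈ A, V.ev x F ≠ 0 := by
  classical
  induction c with
  | zero =>
    intro A hA
    rw [Finset.card_eq_zero] at hA
    subst hA
    obtain ⟨k, F, hF, h⟩ := V.good_list e he (List.finRange V.r)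
    refine ⟨k, F, hF, fun x hx => h x hx ?_, by simp⟩
    obtain ⟨i, hi⟩ := V.T_ne x
    exact ⟨i, by simp, hi⟩
  | succ c ih =>
    intro A hA
    obtain ⟨p, hp⟩ : A.Nonempty := Finset.card_pos.mp (by omega)
    by_cases hdom : ∃ y ∈ A, y ≠ p ∧ ∀ n, ∀ E ∈ V.S n, V.ev y E = 0 → V.ev p E = 0
    · obtain ⟨y, hy, hyp, hE⟩ := hdom
      obtain ⟨k, F, hF, h1, h2⟩ := ih (A.erase y) (by rw [Finset.card_erase_of_mem hy]; omega)
      refine ⟨k, F, hF, h1, fun x hx => ?_⟩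
      by_cases hxy : x = y
      · subst hxy
        exact fun h0 => h2 p (Finset.mem_erase.mpr ⟨hyp.symm, hp⟩) (hE _ F hF h0)
      · exact h2 x (Finset.mem_erase.mpr ⟨hxy, hx⟩)
    push Not at hdom
    obtain ⟨k, F, hF, h1, h2⟩ := ih (A.erase p) (by rw [Finset.card_erase_of_mem hp]; omega)
    by_cases hFp : V.ev p F = 0
    swap
    · refine ⟨k, F, hF, h1, fun x hx => ?_⟩
      by_cases hxy : x = p
      · exact hxy ▸ hFp
      · exact h2 x (Finset.mem_erase.mpr ⟨hxy, hx⟩)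
    have hH0 : ∀ B : Finset X, B ⊆ A.erase p → ∃ n, ∃ H ∈ V.S n, V.ev p H ≠ 0 ∧
        ∀ x ∈ B, V.ev x H = 0 := by
      intro B
      induction B using Finset.induction_on with
      | empty => exact fun _ => ⟨0, 1, V.one_mem, by simp, by simp⟩
      | insert y B _ ihB =>
        intro hB
        obtain ⟨n, H, hH, a1, a2⟩ := ihB ((Finset.subset_insert _ _).trans hB)
        have hy := Finset.mem_erase.mp (hB (Finset.mem_insert_self _ _))
        obtain ⟨n', E, hE, b1, b2⟩ := hdom y hy.2 hy.1
        refine ⟨_, _, V.mul_mem hE hH, by rw [map_mul]; exact mul_ne_zero b2 a1, ?_⟩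
        intro x hx
        rw [map_mul]
        rcases Finset.mem_insert.mp hx with rfl | hx
        · rw [b1, zero_mul]
        · rw [a2 x hx, mul_zero]
    obtain ⟨n, H, hH, a1, a2⟩ := hH0 _ subset_rfl
    obtain ⟨l, hl⟩ := exists_pow_ge e he n
    obtain ⟨i, hi⟩ := V.T_ne p
    have hH' : V.T i ^ (e ^ l - n) * H ∈ V.S (e ^ l) :=
      V.mem_cast (V.mul_mem (V.pow_mem (V.T_mem i) _) hH) (by omega)
    obtain ⟨N, hN⟩ := V.combine (m := e ^ (k + l)) (pow_pos (by omega) _)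
      (V.pow_mem' hF (e ^ l) (by ring)) (V.pow_mem' hH' (e ^ k) (by ring)) (A.erase p)
      (fun x hx => by rw [map_pow]; exact pow_ne_zero _ (h2 x hx))
      (fun x hx => by
        rw [map_pow, map_mul, a2 x hx, mul_zero, zero_pow (pow_pos (by omega) _).ne'])
    obtain ⟨l', hl'⟩ := exists_pow_ge e he N
    obtain ⟨Q, hQ, c1, c2, c3⟩ := hN _ hl'
    refine ⟨l' + (k + l), Q, V.mem_cast hQ (pow_add _ _ _).symm, fun x hx => c1 x hx ?_, ?_⟩
    · rw [map_pow]; exact pow_ne_zero _ (h1 x hx)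
    · intro x hx
      by_cases hxy : x = p
      · subst hxy
        refine c2 x ?_ ?_
        · rw [map_pow, hFp, zero_pow (pow_pos (by omega) _).ne']
        · rw [map_pow, map_mul, map_pow]
          exact pow_ne_zero _ (mul_ne_zero (pow_ne_zero _ hi) a1)
      · exact c3 x (Finset.mem_erase.mpr ⟨hxy, hx⟩)

theorem main (A : Finset X) : ∃ n₀ : ℕ, 0 < n₀ ∧ ∀ n ≥ n₀, ∃ F ∈ V.S n,
    (∀ x ∈ V.G, V.ev x F ≠ 0) ∧ ∀ x ∈ A, V.ev x F ≠ 0 := by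
  obtain ⟨a, F, hF, h1, h2⟩ := V.good_finset 2 le_rfl _ A rfl
  obtain ⟨b, H, hH, g1, g2⟩ := V.good_finset 3 (by omega) _ A rfl
  have hco : Nat.gcd (2 ^ a) (3 ^ b) = 1 := Nat.Coprime.pow _ _ (by norm_num)
  refine ⟨2 ^ a * 3 ^ b, by positivity, fun n hn => ?_⟩
  obtain ⟨i, j, hij⟩ := Nat.exists_add_mul_eq_of_gcd_dvd_of_mul_pred_le (2 ^ a) (3 ^ b) n
    (by rw [hco]; exact one_dvd _)
    (le_trans (Nat.mul_le_mul (Nat.pred_le _) (Nat.pred_le _)) hn)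
  refine ⟨F ^ i * H ^ j, V.mem_cast (V.mul_mem (V.pow_mem hF i) (V.pow_mem hH j)) (by omega), ?_, ?_⟩
  · intro x hx
    rw [map_mul, map_pow, map_pow]
    exact mul_ne_zero (pow_ne_zero _ (h1 x hx)) (pow_ne_zero _ (g1 x hx))
  · intro x hx
    rw [map_mul, map_pow, map_pow]
    exact mul_ne_zero (pow_ne_zero _ (h2 x hx)) (pow_ne_zero _ (g2 x hx))

end Av

end P3

section P4
open Polynomial

lemma height_mvPoly (k : Type*) [Field k] : ∀ (n : ℕ) (m : Ideal (MvPolynomial (Fin n) k)),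
    m.IsMaximal → m.height = n := by
  intro n
  induction n with
  | zero =>
    intro m hm
    let e := MvPolynomial.isEmptyRingEquiv k (Fin 0)
    have hf : IsField (MvPolynomial (Fin 0) k) := e.toMulEquiv.isField (Field.toIsField k)
    let _ := hf.toField
    have : m = ⊥ := (Ideal.eq_bot_or_top m).resolve_right hm.ne_top
    rw [this]; simp
  | succ n ih =>
    intro m hm
    let e := (MvPolynomial.finSuccEquiv k n).toRingEquiv
    let m' : Ideal (MvPolynomial (Fin n) k)[X] := m.comap e.symm
    have hm' : m'.IsMaximal := Ideal.comap_isMaximal_of_equiv e.symm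
    have h1 : m'.height = m.height := RingEquiv.height_comap e.symm m
    have h2 : (m'.comap (C : MvPolynomial (Fin n) k →+* _)).IsMaximal :=
      Polynomial.isMaximal_comap_C_of_isJacobsonRing m'
    have hlo : m'.LiesOver (m'.comap (C : MvPolynomial (Fin n) k →+* _)) := ⟨rfl⟩
    have h3 := Polynomial.height_eq_height_add_one (m'.comap (C : MvPolynomial (Fin n) k →+* _)) m'
    rw [← h1, h3, ih _ h2]; simp

/-- every maximal ideal of a finitely generated domain over a field has height the dimension -/
lemma dim_le_height {k R : Type*} [Field k] [CommRing R] [IsDomain R] [Algebra k R]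
    [Algebra.FiniteType k R] (m : Ideal R) [m.IsMaximal] : ringKrullDim R ≤ m.height := by
  obtain ⟨s, g, hg, hgi⟩ := exists_integral_inj_algHom_of_fg k R
  have hR : IsNoetherianRing R := Algebra.FiniteType.isNoetherianRing k R
  let _ : Algebra (MvPolynomial (Fin s) k) R := g.toRingHom.toAlgebra
  have : Algebra.IsIntegral (MvPolynomial (Fin s) k) R := ⟨hgi⟩
  have : FaithfulSMul (MvPolynomial (Fin s) k) R := (faithfulSMul_iff_algebraMap_injective _ _).mpr hg
  have hmax : (m.under (MvPolynomial (Fin s) k)).IsMaximal := Ideal.isMaximal_comap_of_isIntegral_of_isMaximal m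
  have h1 := Ideal.height_eq_height_add_of_liesOver_of_hasGoingDown (m.under (MvPolynomial (Fin s) k)) m
  rw [height_mvPoly k s _ hmax] at h1
  have h2 : ringKrullDim R ≤ ringKrullDim (MvPolynomial (Fin s) k) := by
    refine Order.krullDim_le_of_strictMono (PrimeSpectrum.comap (algebraMap _ R)) ?_
    intro a b hab
    refine lt_of_le_of_ne (Ideal.comap_mono hab.le) ?_
    intro h
    obtain ⟨x, hx, hx'⟩ := Set.exists_of_ssubset hab
    have hne := Ideal.comap_lt_comap_of_integral_mem_sdiff (R := MvPolynomial (Fin s) k) 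
      (I := a.asIdeal) (J := b.asIdeal) hab.le ⟨hx, hx'⟩ (Algebra.IsIntegral.isIntegral x)
    exact hne.ne (congrArg PrimeSpectrum.asIdeal h)
  rw [MvPolynomial.ringKrullDim_of_isNoetherianRing, ringKrullDim_eq_zero_of_field] at h2
  refine h2.trans ?_
  rw [h1]
  simp only [zero_add, Nat.card_eq_fintype_card, Fintype.card_fin, WithBot.coe_add, WithBot.coe_natCast]
  exact le_add_of_nonneg_right (WithBot.coe_le_coe.mpr bot_le)

lemma dim_le_dim_away {k R : Type*} [Field k] [CommRing R] [IsDomain R] [Algebra k R]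
    [Algebra.FiniteType k R] (f : R) (hf : f ≠ 0) (S : Type*) [CommRing S] [Algebra R S]
    [IsLocalization.Away f S] : ringKrullDim R ≤ ringKrullDim S := by
  have : IsJacobsonRing R := isJacobsonRing_of_finiteType (A := k)
  have hinj := IsLocalization.injective S (powers_le_nonZeroDivisors_of_noZeroDivisors hf)
  have : Nontrivial S := hinj.nontrivial
  obtain ⟨M, hM⟩ := Ideal.exists_maximal S
  have h1 : (M.under R).IsMaximal := ((IsLocalization.isMaximal_iff_isMaximal_disjoint S f M).mp hM).1
  have h2 := dim_le_height (k := k) (M.under R)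
  rw [IsLocalization.height_under (Submonoid.powers f) M] at h2
  exact h2.trans (Ideal.height_le_ringKrullDim_of_ne_top hM.ne_top)

lemma dim_le_quotient_add_one_domain {k R : Type*} [Field k] [CommRing R] [IsDomain R] [Algebra k R]
    [Algebra.FiniteType k R] (h : R) (p : Ideal R) (hp : p ∈ (Ideal.span {h}).minimalPrimes) :
    ringKrullDim R ≤ ringKrullDim (R ⧸ p) + 1 := by
  classical
  have : IsJacobsonRing R := isJacobsonRing_of_finiteType (A := k)
  have hR : IsNoetherianRing R := Algebra.FiniteType.isNoetherianRing k R
  have hfin := Ideal.finite_minimalPrimes_of_isNoetherianRing R (Ideal.span {h})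
  have hpp : p.IsPrime := hp.1.1
  obtain ⟨g, hgp, hg⟩ : ∃ g, g ∉ p ∧ ∀ p' ∈ (Ideal.span {h}).minimalPrimes, p' ≠ p → g ∈ p' := by
    have : ¬ (((hfin.toFinset.erase p).inf id) ≤ p) := by
      intro hle
      obtain ⟨p', hp', hle'⟩ := (Ideal.IsPrime.inf_le' hpp).mp hle
      rw [Finset.mem_erase, Set.Finite.mem_toFinset] at hp'
      exact hp'.1 (le_antisymm hle' (hp.2 hp'.2.1 hle'))
    obtain ⟨g, hg, hgp⟩ := SetLike.not_le_iff_exists.mp this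
    refine ⟨g, hgp, fun p' hp' hne => ?_⟩
    exact (Finset.inf_le (f := id) (Finset.mem_erase.mpr ⟨hne, hfin.mem_toFinset.mpr hp'⟩)) hg
  obtain ⟨m, hm, hpm, hgm⟩ : ∃ m : Ideal R, m.IsMaximal ∧ p ≤ m ∧ g ∉ m := by
    have hj : p.jacobson = p := isJacobsonRing_iff.mp inferInstance p hpp.isRadical
    rw [← hj, Ideal.jacobson, Submodule.mem_sInf] at hgp
    push Not at hgp
    obtain ⟨m, ⟨h1, h2⟩, h3⟩ := hgp
    exact ⟨m, h2, h1, h3⟩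
  have h1 := dim_le_height (k := k) m
  let Rm := Localization.AtPrime m
  let hh : Rm := algebraMap R Rm h
  have hhm : h ∈ m := hpm (hp.1.2 (Ideal.mem_span_singleton_self h))
  have hhm' : hh ∈ IsLocalRing.maximalIdeal Rm := by
    rw [← Localization.AtPrime.map_eq_maximalIdeal]; exact Ideal.mem_map_of_mem _ hhm
  have h2 : ringKrullDim Rm ≤ ringKrullDim (Rm ⧸ Ideal.span {hh}) + 1 := by
    rw [← IsLocalRing.maximalIdeal_height_eq_ringKrullDim]
    exact Ideal.height_le_ringKrullDim_quotient_add_one hhm'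
  rw [IsLocalization.AtPrime.ringKrullDim_eq_height m Rm] at h2
  refine h1.trans (h2.trans ?_)
  gcongr
  rw [ringKrullDim_quotient, ringKrullDim_quotient]
  have hz : ∀ P : PrimeSpectrum.zeroLocus (Ideal.span {hh} : Set Rm),
      PrimeSpectrum.comap (algebraMap R Rm) P.1 ∈ PrimeSpectrum.zeroLocus (p : Set R) := by
    rintro ⟨P, hP⟩
    have hle : P.asIdeal.comap (algebraMap R Rm) ≤ m := (Ideal.comap_mono (IsLocalRing.le_maximalIdeal P.2.ne_top)).trans_eq
        Localization.AtPrime.under_maximalIdeal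
    have hh' : Ideal.span {h} ≤ P.asIdeal.comap (algebraMap R Rm) := by
      rw [Ideal.span_singleton_le_iff_mem, Ideal.mem_comap]
      exact hP (Ideal.mem_span_singleton_self _)
    obtain ⟨p', hp', hp'le⟩ := Ideal.exists_minimalPrimes_le hh'
    by_cases hne : p' = p
    · subst hne; exact hp'le
    · exact absurd (hle (hp'le (hg p' hp' hne))) hgm
  refine Order.krullDim_le_of_strictMono (fun P => ⟨_, hz P⟩) ?_
  intro P Q hPQ
  have hinj := PrimeSpectrum.localization_comap_injective Rm m.primeCompl
  have hle : PrimeSpectrum.comap (algebraMap R Rm) P.1 ≤ PrimeSpectrum.comap (algebraMap R Rm) Q.1 :=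
    Ideal.comap_mono (show P.1.asIdeal ≤ Q.1.asIdeal from hPQ.le)
  refine lt_of_le_of_ne hle ?_
  intro h
  exact hPQ.ne (Subtype.ext (hinj (congrArg Subtype.val h)))

lemma dim_le_quotient_add_one {k R : Type*} [Field k] [CommRing R] [Algebra k R]
    [Algebra.FiniteType k R] (h : R) (q p : Ideal R) (hq : q.IsPrime) (hqp : q ≤ p)
    (hp : p ∈ (Ideal.span {h}).minimalPrimes) :
    ringKrullDim (R ⧸ q) ≤ ringKrullDim (R ⧸ p) + 1 := by
  have hpp : p.IsPrime := hp.1.1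
  let π := Ideal.Quotient.mk q
  have h1 : p.map π ∈ (Ideal.span {π h}).minimalPrimes := by
    refine ⟨⟨Ideal.map_isPrime_of_surjective Ideal.Quotient.mk_surjective (by rwa [Ideal.mk_ker]), ?_⟩, ?_⟩
    · rw [Ideal.span_singleton_le_iff_mem]
      exact Ideal.mem_map_of_mem _ (hp.1.2 (Ideal.mem_span_singleton_self h))
    · rintro P ⟨hP1, hP2⟩ hP3
      rw [Ideal.map_le_iff_le_comap]
      refine hp.2 ⟨inferInstance, ?_⟩ ?_
      · rw [Ideal.span_singleton_le_iff_mem, Ideal.mem_comap]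
        exact hP2 (Ideal.mem_span_singleton_self _)
      · refine (Ideal.comap_mono hP3).trans ?_
        rw [Ideal.comap_map_of_surjective _ Ideal.Quotient.mk_surjective, ← RingHom.ker_eq_comap_bot,
          Ideal.mk_ker]
        exact sup_le le_rfl hqp
  have h2 := dim_le_quotient_add_one_domain (k := k) (π h) _ h1
  rwa [ringKrullDim_eq_of_ringEquiv (DoubleQuot.quotQuotEquivQuotOfLE hqp)] at h2


end P4

section P5
open Topology

lemma le_krullDim_iff_chain {α : Type*} [Preorder α] (n : ℕ) :
    (n : WithBot ℕ∞) ≤ Order.krullDim α ↔ ∃ c : ℕ → α, ∀ i < n, c (i+1) < c i := by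
  rw [← Order.krullDim_orderDual, Order.le_krullDim_iff]
  constructor
  · rintro ⟨l, hl⟩
    refine ⟨fun i => OrderDual.ofDual (l (Fin.ofNat _ i)), fun i hi => ?_⟩
    have : (Fin.ofNat (l.length+1) i) < (Fin.ofNat (l.length+1) (i+1)) := by
      rw [Fin.lt_def]; simp [Nat.mod_eq_of_lt (show i < l.length+1 by omega),
        Nat.mod_eq_of_lt (show i+1 < l.length+1 by omega)]
    exact l.strictMono this
  · rintro ⟨c, hc⟩
    exact ⟨⟨n, fun i => OrderDual.toDual (c i), fun i => by simpa using hc i i.2⟩, rfl⟩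

/-- There is a chain of length n of specializations of x within T. -/
def HasChain {X : Type*} [TopologicalSpace X] (T : Set X) (x : X) (n : ℕ) : Prop :=
  ∃ c : ℕ → X, (∀ i ≤ n, c i ∈ T ∧ x ⤳ c i) ∧ ∀ i < n, c i ⤳ c (i+1) ∧ c i ≠ c (i+1)

lemma HasChain.of_embedding {X Y : Type*} [TopologicalSpace X] [TopologicalSpace Y] {e : X → Y}
    (he : IsEmbedding e) (T : Set X) (x : X) (n : ℕ) :
    HasChain (e '' T) (e x) n ↔ HasChain T x n := by
  constructor
  · rintro ⟨c, h1, h2⟩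
    have hc : ∀ i, ∃ a, i ≤ n → a ∈ T ∧ e a = c i := fun i => by
      by_cases hi : i ≤ n
      · obtain ⟨a, ha, hb⟩ := (h1 i hi).1
        exact ⟨a, fun _ => ⟨ha, hb⟩⟩
      · exact ⟨x, fun h => absurd h hi⟩
    choose c' hc' using hc
    refine ⟨c', fun i hi => ⟨(hc' i hi).1, ?_⟩, fun i hi => ?_⟩
    · rw [← he.isInducing.specializes_iff, (hc' i hi).2]; exact (h1 i hi).2
    · rw [← he.isInducing.specializes_iff, (hc' i hi.le).2, (hc' (i+1) hi).2]
      refine ⟨(h2 i hi).1, fun h => (h2 i hi).2 ?_⟩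
      rw [← (hc' i hi.le).2, ← (hc' (i+1) hi).2, h]
  · rintro ⟨c, h1, h2⟩
    exact ⟨fun i => e (c i), fun i hi => ⟨⟨_, (h1 i hi).1, rfl⟩, (h1 i hi).2.map he.continuous⟩,
      fun i hi => ⟨(h2 i hi).1.map he.continuous, fun h => (h2 i hi).2 (he.injective h)⟩⟩

lemma le_topDim_closure {X : Type*} [TopologicalSpace X] [T0Space X] [QuasiSober X] (x : X) (n : ℕ) :
    (n : WithBot ℕ∞) ≤ topologicalKrullDim (closure {x} : Set X) ↔ HasChain Set.univ x n := by
  have hq : QuasiSober (closure {x} : Set X) :=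
    (isClosed_closure.isClosedEmbedding_subtypeVal).quasiSober
  unfold topologicalKrullDim
  rw [le_krullDim_iff_chain]
  constructor
  · rintro ⟨c, hc⟩
    have hg : ∀ i, IsGenericPoint ((c i).isIrreducible.genericPoint) (c i : Set (closure {x} : Set X)) := 
      fun i => by 
        have := (c i).isIrreducible.isGenericPoint_genericPoint_closure
        rwa [(c i).isClosed.closure_eq] at this
    refine ⟨fun i => ((c i).isIrreducible.genericPoint).1, fun i hi => ⟨trivial, ?_⟩, fun i hi => ⟨?_, ?_⟩⟩
    · rw [specializes_iff_mem_closure]; exact ((c i).isIrreducible.genericPoint).2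
    · refine Specializes.map ?_ continuous_subtype_val
      exact (hg i).specializes ((hc i hi).le (hg (i+1)).mem)
    · intro h
      have h' := Subtype.ext h
      refine (hc i hi).ne ?_
      apply TopologicalSpace.IrreducibleCloseds.ext
      rw [← (hg i).def, ← (hg (i+1)).def, h']
  · rintro ⟨c, h1, h2⟩
    let c' : ℕ → (closure {x} : Set X) := fun i => if h : i ≤ n then ⟨c i, (h1 i h).2.mem_closure⟩ else ⟨x, subset_closure rfl⟩
    have hc' : ∀ i ≤ n, (c' i).1 = c i := fun i hi => by simp [c', hi]
    refine ⟨fun i => ⟨closure {c' i}, isIrreducible_singleton.closure, isClosed_closure⟩, fun i hi => ?_⟩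
    have hs : c' i ⤳ c' (i+1) := by
      rw [← IsInducing.subtypeVal.specializes_iff, hc' _ hi.le, hc' _ hi]; exact (h2 i hi).1
    refine lt_of_le_of_ne ?_ ?_
    · exact hs.closure_subset
    · intro h
      have h3 : closure {c' (i+1)} = closure {c' i} := congrArg TopologicalSpace.IrreducibleCloseds.carrier h
      have h4 : c' i = c' (i+1) := (hs.antisymm (specializes_iff_closure_subset.mpr h3.ge)).eq
      exact (h2 i hi).2 (by rw [← hc' _ hi.le, ← hc' _ hi, h4])

lemma topDim_closure_eq {X : Type*} [TopologicalSpace X] [T0Space X] [QuasiSober X] (x : X) (n : ℕ) :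
    topologicalKrullDim (closure {x} : Set X) = n ↔ HasChain Set.univ x n ∧ ¬ HasChain Set.univ x (n+1) := by
  rw [← le_topDim_closure, ← le_topDim_closure]
  generalize topologicalKrullDim (closure {x} : Set X) = a
  constructor
  · rintro rfl
    refine ⟨le_rfl, ?_⟩
    norm_cast; omega
  · rintro ⟨h1, h2⟩
    refine le_antisymm ?_ h1
    rw [not_le] at h2
    induction a with
    | bot => simp
    | coe a => 
      induction a with
      | top => exact absurd h2 (by simpa using le_top)
      | coe a => norm_cast at h2 ⊢; omega

/-- pure dimension in terms of points -/
lemma pure_iff {X : Type*} [TopologicalSpace X] [T0Space X] [QuasiSober X] (n : ℕ) :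
    (∀ C ∈ irreducibleComponents X, topologicalKrullDim C = n) ↔
    ∀ x : X, (∀ x', x' ⤳ x → x' = x) → HasChain Set.univ x n ∧ ¬ HasChain Set.univ x (n+1) := by
  constructor
  · intro h x hx
    rw [← topDim_closure_eq]
    apply h
    refine ⟨isIrreducible_singleton.closure, fun C hC hle => ?_⟩
    have hg := hC.isGenericPoint_genericPoint_closure
    have : hC.genericPoint ⤳ x := hg.specializes (subset_closure (hle (subset_closure rfl)))
    rw [hx _ this] at hg
    rw [hg.def]; exact subset_closure
  · intro h C hC
    have hcl := isClosed_of_mem_irreducibleComponents _ hC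
    have hg := hC.1.isGenericPoint_genericPoint_closure
    rw [hcl.closure_eq] at hg
    rw [← hg.def, topDim_closure_eq]
    apply h
    intro x' hx'
    have := hC.2 (isIrreducible_singleton (x := x')).closure (by rw [← hg.def]; exact hx'.closure_subset)
    exact (hx'.antisymm (hg.specializes (this (subset_closure rfl)))).eq


end P5

section P6
open Topology AlgebraicGeometry CategoryTheory

lemma hasChain_prime {R : Type*} [CommRing R] (p : PrimeSpectrum R) (n : ℕ) :
    HasChain Set.univ p n ↔ (n : WithBot ℕ∞) ≤ ringKrullDim (R ⧸ p.asIdeal) := by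
  rw [ringKrullDim_quotient, ← Order.krullDim_orderDual, le_krullDim_iff_chain]
  constructor
  · rintro ⟨c, h1, h2⟩
    let c' : ℕ → (PrimeSpectrum.zeroLocus (p.asIdeal : Set R))ᵒᵈ := fun i => OrderDual.toDual
      (if h : i ≤ n then ⟨c i, (PrimeSpectrum.le_iff_specializes _ _).mpr (h1 i h).2⟩ else ⟨p, le_refl p.asIdeal⟩)
    have hc' : ∀ i ≤ n, (OrderDual.ofDual (c' i)).1 = c i := fun i hi => by simp [c', hi]
    refine ⟨c', fun i hi => ?_⟩
    rw [← OrderDual.ofDual_lt_ofDual, ← Subtype.coe_lt_coe, hc' _ hi.le, hc' _ hi]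
    exact lt_of_le_of_ne ((PrimeSpectrum.le_iff_specializes _ _).mpr (h2 i hi).1) (h2 i hi).2
  · rintro ⟨c, h⟩
    refine ⟨fun i => (OrderDual.ofDual (c i)).1, fun i hi => ⟨trivial, ?_⟩, fun i hi => ?_⟩
    · rw [← PrimeSpectrum.le_iff_specializes]; exact (OrderDual.ofDual (c i)).2
    · have := h i hi
      rw [← OrderDual.ofDual_lt_ofDual, ← Subtype.coe_lt_coe] at this
      rw [← PrimeSpectrum.le_iff_specializes]
      exact ⟨this.le, this.ne⟩

lemma hasChain_affine {Y : Scheme} {U : Y.Opens} (hU : IsAffineOpen U) (y : Y) (hy : y ∈ U) (n : ℕ) :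
    HasChain (U : Set Y) y n ↔ (n : WithBot ℕ∞) ≤ ringKrullDim (Γ(Y, U) ⧸ (hU.primeIdealOf ⟨y, hy⟩).asIdeal) := by
  have h := HasChain.of_embedding hU.fromSpec.isOpenEmbedding.isEmbedding Set.univ (hU.primeIdealOf ⟨y, hy⟩) n
  rw [Set.image_univ, hU.range_fromSpec, hU.fromSpec_primeIdealOf] at h
  exact h.trans (hasChain_prime _ _)

lemma HasChain.mono {X : Type*} [TopologicalSpace X] {T T' : Set X} (h : T ⊆ T') {x : X} {n : ℕ}
    (hc : HasChain T x n) : HasChain T' x n := by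
  obtain ⟨c, h1, h2⟩ := hc
  exact ⟨c, fun i hi => ⟨h (h1 i hi).1, (h1 i hi).2⟩, h2⟩

lemma HasChain.mono_n {X : Type*} [TopologicalSpace X] {T : Set X} {x : X} {n m : ℕ} (hn : n ≤ m)
    (hc : HasChain T x m) : HasChain T x n := by
  obtain ⟨c, h1, h2⟩ := hc
  exact ⟨c, fun i hi => h1 i (hi.trans hn), fun i hi => h2 i (hi.trans_le hn)⟩

variable {k : Type*} [Field k]

/-- algebra structure -/
lemma hasChain_basicOpen {Y : Scheme} {U : Y.Opens} (hU : IsAffineOpen U) [Algebra k Γ(Y, U)]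
    [Algebra.FiniteType k Γ(Y, U)] (a : Γ(Y, U)) (y : Y) (hy : y ∈ Y.basicOpen a) (n : ℕ)
    (h : HasChain (U : Set Y) y n) : HasChain (Y.basicOpen a : Set Y) y n := by
  have hyU : y ∈ U := Y.basicOpen_le a hy
  set p := hU.primeIdealOf ⟨y, hyU⟩ with hp
  have hap : a ∉ p.asIdeal := by
    have h1 : p ∈ hU.fromSpec ⁻¹ᵁ (Y.basicOpen a) := by
      change hU.fromSpec p ∈ Y.basicOpen a
      rw [hU.fromSpec_primeIdealOf]; exact hy
    rw [hU.fromSpec_preimage_basicOpen] at h1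
    exact h1
  rw [hasChain_affine hU y hyU] at h
  have hinj := hU.fromSpec.isOpenEmbedding.isEmbedding
  let π := Ideal.Quotient.mk p.asIdeal
  have h2 : (n : WithBot ℕ∞) ≤ ringKrullDim (Localization.Away (π a)) :=
    h.trans (dim_le_dim_away (k := k) (π a) (by rwa [Ne, Ideal.Quotient.eq_zero_iff_mem]) _)
  let φ : Γ(Y, U) →+* Localization.Away (π a) := (algebraMap _ _).comp π
  have hφ : IsEmbedding (PrimeSpectrum.comap φ) := by
    rw [PrimeSpectrum.comap_comp]
    exact (PrimeSpectrum.isClosedEmbedding_comap_of_surjective _ π Ideal.Quotient.mk_surjective).isEmbedding.comp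
      (PrimeSpectrum.localization_away_isOpenEmbedding (Localization.Away (π a)) (π a)).isEmbedding
  unfold ringKrullDim at h2
  rw [← Order.krullDim_orderDual, le_krullDim_iff_chain] at h2
  obtain ⟨c, hc⟩ := h2
  refine ⟨fun i => hU.fromSpec (PrimeSpectrum.comap φ (OrderDual.ofDual (c i))), fun i hi => ⟨?_, ?_⟩, fun i hi => ⟨?_, ?_⟩⟩
  · change _ ∈ hU.fromSpec ⁻¹ᵁ (Y.basicOpen a)
    rw [hU.fromSpec_preimage_basicOpen]
    change φ a ∉ (OrderDual.ofDual (c i)).asIdeal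
    intro hmem
    exact (OrderDual.ofDual (c i)).2.ne_top (Ideal.eq_top_of_isUnit_mem _ hmem
      (IsLocalization.Away.algebraMap_isUnit (π a)))
  · have hy' : hU.fromSpec p = y := hU.fromSpec_primeIdealOf ⟨y, hyU⟩
    refine (specializes_of_eq hy'.symm).trans ?_
    refine Specializes.map ?_ hinj.continuous
    refine (PrimeSpectrum.le_iff_specializes _ _).mp ?_
    intro b hb
    change φ b ∈ (OrderDual.ofDual (c i)).asIdeal
    have : φ b = 0 := by
      change algebraMap _ _ (π b) = 0
      rw [Ideal.Quotient.eq_zero_iff_mem.mpr hb, map_zero]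
    rw [this]; exact zero_mem _
  · refine Specializes.map (Specializes.map ?_ hφ.continuous) hinj.continuous
    rw [← PrimeSpectrum.le_iff_specializes]; exact (hc i hi).le
  · intro h
    exact (hc i hi).ne' (congrArg OrderDual.toDual (hφ.injective (hinj.injective h)))

lemma hasChain_univ_affine {Y : Scheme} (hft : ∀ U : Y.Opens, IsAffineOpen U → ∃ φ : k →+* Γ(Y, U), φ.FiniteType)
    {U : Y.Opens} (y : Y) (hy : y ∈ U) (n : ℕ)
    (h : HasChain Set.univ y n) : HasChain (U : Set Y) y n := by
  obtain ⟨c, h1, h2⟩ := h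
  obtain ⟨_, ⟨W, hW, rfl⟩, hcW, -⟩ := Y.isBasis_affineOpens.exists_subset_of_mem_open (Set.mem_univ (c n)) isOpen_univ
  have hsp : ∀ i ≤ n, c i ⤳ c n := by
    intro i hi
    induction hi using Nat.decreasingInduction with
    | self => exact specializes_rfl
    | of_succ i hi ih => exact (h2 i hi).1.trans ih
  have h3 : HasChain (W : Set Y) y n := 
    ⟨c, fun i hi => ⟨(hsp i hi).mem_open W.isOpen hcW, (h1 i hi).2⟩, h2⟩
  have hyW : y ∈ W := (h1 n le_rfl).2.mem_open W.isOpen hcW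
  obtain ⟨a, ha, hya⟩ := IsAffineOpen.exists_basicOpen_le hW ⟨y, hy⟩ hyW
  obtain ⟨φ, hφ⟩ := hft W hW
  let _ := φ.toAlgebra
  have : Algebra.FiniteType k Γ(Y, W) := hφ
  exact (hasChain_basicOpen (k := k) hW a y hya n h3).mono ha

theorem main_dim {Y : Scheme} (hft : ∀ U : Y.Opens, IsAffineOpen U → ∃ φ : k →+* Γ(Y, U), φ.FiniteType)
    (d : ℕ) (hd : 1 ≤ d) 
    (hY : ∀ y : Y, (∀ y', y' ⤳ y → y' = y) → HasChain Set.univ y d ∧ ¬ HasChain Set.univ y (d+1))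
    (Z : Set Y) (hZ : ∀ y ∈ Z, ∃ U : Y.Opens, IsAffineOpen U ∧ y ∈ U ∧ ∃ h : Γ(Y, U), ∀ z ∈ U, z ∈ Z ↔ z ∉ Y.basicOpen h)
    (hgen : ∀ y : Y, (∀ y', y' ⤳ y → y' = y) → y ∉ Z) (hZs : ∀ y ∈ Z, ∀ z, y ⤳ z → z ∈ Z)
    (y : Y) (hy : y ∈ Z) (hym : ∀ y' ∈ Z, y' ⤳ y → y' = y) :
    HasChain Set.univ y (d-1) ∧ ¬ HasChain Set.univ y d := by
  obtain ⟨y0, hy0y, hy0⟩ : ∃ y0 : Y, y0 ⤳ y ∧ ∀ y', y' ⤳ y0 → y' = y0 := by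
    have hC := irreducibleComponent_mem_irreducibleComponents y
    have hg := hC.1.isGenericPoint_genericPoint_closure
    rw [isClosed_irreducibleComponent.closure_eq] at hg
    refine ⟨_, hg.specializes mem_irreducibleComponent, ?_⟩
    intro x' hx'
    have := hC.2 (isIrreducible_singleton (x := x')).closure (by
      refine hg.def.ge.trans ?_; exact hx'.closure_subset)
    exact (hx'.antisymm (hg.specializes (this (subset_closure rfl)))).eq
  obtain ⟨hc1, hc2⟩ := hY y0 hy0
  have hy0Z := hgen y0 hy0
  refine ⟨?_, ?_⟩
  · obtain ⟨U, hU, hyU, h, hh⟩ := hZ y hy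
    have hy0U : y0 ∈ U := hy0y.mem_open U.isOpen hyU
    have h1 := hasChain_univ_affine hft y0 hy0U d hc1
    rw [hasChain_affine hU y0 hy0U] at h1
    obtain ⟨φ, hφ⟩ := hft U hU
    let _ := φ.toAlgebra
    have : Algebra.FiniteType k Γ(Y, U) := hφ
    have hemb := hU.fromSpec.isOpenEmbedding.isEmbedding
    have hmem : ∀ p : PrimeSpectrum Γ(Y, U), hU.fromSpec p ∈ Z ↔ h ∈ p.asIdeal := by
      intro p
      have hpU : hU.fromSpec p ∈ U := by
        have : hU.fromSpec p ∈ Set.range hU.fromSpec := ⟨p, rfl⟩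
        rw [hU.range_fromSpec] at this; exact this
      rw [hh _ hpU, not_iff_comm]
      change _ ↔ p ∈ hU.fromSpec ⁻¹ᵁ (Y.basicOpen h)
      rw [hU.fromSpec_preimage_basicOpen]
      rfl
    have ey : hU.fromSpec (hU.primeIdealOf ⟨y, hyU⟩) = y := hU.fromSpec_primeIdealOf ⟨y, hyU⟩
    have ey0 : hU.fromSpec (hU.primeIdealOf ⟨y0, hy0U⟩) = y0 := hU.fromSpec_primeIdealOf ⟨y0, hy0U⟩
    have h2 := dim_le_quotient_add_one (k := k) h (hU.primeIdealOf ⟨y0, hy0U⟩).asIdeal 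
      (hU.primeIdealOf ⟨y, hyU⟩).asIdeal (hU.primeIdealOf ⟨y0, hy0U⟩).2 ?_ ?_
    · refine ((hasChain_affine hU y hyU (d-1)).mpr ?_).mono (Set.subset_univ _)
      have h3 := h1.trans h2
      generalize ringKrullDim (Γ(Y, U) ⧸ (hU.primeIdealOf ⟨y, hyU⟩).asIdeal) = a at h3
      obtain ⟨e, rfl⟩ : ∃ e, d = e + 1 := ⟨d-1, by omega⟩
      induction a with
      | bot => simp at h3
      | coe a =>
        induction a with
        | top => simp
        | coe a => norm_cast at h3 ⊢; omega
    · refine (PrimeSpectrum.le_iff_specializes _ _).mpr ?_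
      refine hemb.isInducing.specializes_iff.mp ?_
      exact (specializes_of_eq ey0).trans (hy0y.trans (specializes_of_eq ey.symm))
    · refine ⟨⟨(hU.primeIdealOf ⟨y, hyU⟩).2, ?_⟩, ?_⟩
      · rw [Ideal.span_singleton_le_iff_mem, ← hmem, ey]; exact hy
      · rintro P ⟨hP1, hP2⟩ hP3
        rw [Ideal.span_singleton_le_iff_mem] at hP2
        have := hym (hU.fromSpec ⟨P, hP1⟩) ((hmem ⟨P, hP1⟩).mpr hP2)
          ((hemb.isInducing.specializes_iff.mpr ((PrimeSpectrum.le_iff_specializes ⟨P, hP1⟩ (hU.primeIdealOf ⟨y, hyU⟩)).mp hP3)).trans (specializes_of_eq ey))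
        have h4 := hemb.injective (this.trans ey.symm)
        exact (congrArg PrimeSpectrum.asIdeal h4).ge
  · rintro ⟨c, h1, h2⟩
    apply hc2
    refine ⟨fun i => if i = 0 then y0 else c (i-1), fun i hi => ⟨trivial, ?_⟩, fun i hi => ?_⟩
    · rcases i with _ | i
      · exact specializes_rfl
      · simpa using hy0y.trans (h1 i (by omega)).2
    · rcases i with _ | i
      · simp only [if_true, zero_add, one_ne_zero, if_false, Nat.sub_self]
        refine ⟨hy0y.trans (h1 0 (by omega)).2, fun h => hy0Z ?_⟩
        rw [h]; exact hZs y hy _ (h1 0 (by omega)).2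
      · simpa using h2 i (by omega)


end P6

section P7
open Topology AlgebraicGeometry CategoryTheory

lemma hasChain_subtype {X : Type*} [TopologicalSpace X] (T : Set X) (x : T) (n : ℕ) :
    HasChain Set.univ x n ↔ HasChain T x.1 n := by
  rw [← HasChain.of_embedding IsEmbedding.subtypeVal, Set.image_univ, Subtype.range_coe]

lemma quasiSober_fiber {X S : Scheme} (f : X ⟶ S) (s : S) : QuasiSober ↥(f.base ⁻¹' {s} : Set X) :=
  ((f.fiberHomeo s).symm.isClosedEmbedding).quasiSober

lemma quasiSober_fiber' {X S : Scheme} (f : X ⟶ S) (s : S) (Z : Set X) (hZ : IsClosed Z) :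
    QuasiSober ↥(Z ∩ f.base ⁻¹' {s} : Set X) := by
  have := quasiSober_fiber f s
  refine IsClosedEmbedding.quasiSober (f := Set.inclusion (Set.inter_subset_right : Z ∩ f.base ⁻¹' {s} ⊆ f.base ⁻¹' {s})) ?_
  refine ⟨IsEmbedding.inclusion _, ?_⟩
  rw [Set.range_inclusion]
  have : {x : ↥(f.base ⁻¹' {s} : Set X) | (x : X) ∈ Z ∩ f.base ⁻¹' {s}} = Subtype.val ⁻¹' Z := by
    ext x; exact ⟨fun h => h.1, fun h => ⟨h, x.2⟩⟩
  rw [this]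
  exact hZ.preimage continuous_subtype_val

lemma fiber_ft {X S : Scheme} (f : X ⟶ S) [LocallyOfFiniteType f] (s : S) (U : (f.fiber s).Opens)
    (hU : IsAffineOpen U) : ∃ φ : S.residueField s →+* Γ(f.fiber s, U), φ.FiniteType := by
  have h : LocallyOfFiniteType (f.fiberToSpecResidueField s) :=
    inferInstanceAs (LocallyOfFiniteType (Limits.pullback.snd f (S.fromSpecResidueField s)))
  have h1 := h.finiteType_appLE (U := ⊤) (isAffineOpen_top _) hU le_top
  refine ⟨_, h1.comp (RingHom.FiniteType.of_surjective (Scheme.ΓSpecIso (S.residueField s)).inv.hom 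
    ((ConcreteCategory.bijective_of_isIso (Scheme.ΓSpecIso (S.residueField s)).inv).surjective))⟩

/-- generic points of fibers -/
def GP {X S : Scheme} (f : X ⟶ S) : Set X := {x | ∀ x', x' ⤳ x → f x' = f x → x' = x}

theorem main_dim_X {X S : Scheme} (f : X ⟶ S) [LocallyOfFiniteType f] (d : ℕ) (hd : 1 ≤ d)
    (hdim : PureRelativeDimension f d) (Z : Set X) (hZc : IsClosed Z)
    (hZ : ∀ x ∈ Z, ∃ U : X.Opens, x ∈ U ∧ ∃ h : Γ(X, U), ∀ z ∈ U, z ∈ Z ↔ z ∉ X.basicOpen h)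
    (hgen : ∀ x ∈ GP f, x ∉ Z) (s : S) :
    ∀ C ∈ irreducibleComponents (↥(Z ∩ f.base ⁻¹' {s})),
          topologicalKrullDim (↥C) = ((d - 1 : ℕ) : WithBot ℕ∞) := by
  have := quasiSober_fiber f s
  have := quasiSober_fiber' f s Z hZc
  rw [pure_iff]
  have hX := hdim s
  rw [pure_iff] at hX
  let e := f.fiberι s
  have he : IsEmbedding e := e.isEmbedding
  have hr : Set.range e = f.base ⁻¹' {s} := f.range_fiberι s
  have hes : ∀ y, f (e y) = s := fun y => by
    have : e y ∈ f.base ⁻¹' {s} := by rw [← hr]; exact ⟨y, rfl⟩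
    exact this
  have hgen' : ∀ y, (∀ y', y' ⤳ y → y' = y) → e y ∈ GP f := by
    intro y hy x' hx' hfx'
    have : x' ∈ Set.range e := by rw [hr]; exact hfx'.trans (hes y)
    obtain ⟨y', rfl⟩ := this
    rw [hy y' (he.isInducing.specializes_iff.mp hx')]
  rintro ⟨x, hxZ, hxs⟩ hx
  have hxr : x ∈ Set.range e := by rw [hr]; exact hxs
  obtain ⟨y, rfl⟩ := hxr
  have key := main_dim (k := S.residueField s) (Y := f.fiber s) (fiber_ft f s) d hd ?_ (e ⁻¹' Z) ?_ ?_ ?_ y hxZ ?_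
  · have hZZ : ∀ n, HasChain (Z ∩ f.base ⁻¹' {s}) (e y) n ↔ HasChain Set.univ y n := by
      intro n
      rw [← HasChain.of_embedding he, Set.image_univ, hr]
      refine ⟨HasChain.mono Set.inter_subset_right, ?_⟩
      rintro ⟨c, h1, h2⟩
      exact ⟨c, fun i hi => ⟨⟨(h1 i hi).2.mem_closed hZc hxZ, (h1 i hi).1⟩, (h1 i hi).2⟩, h2⟩
    rw [hasChain_subtype, hasChain_subtype, hZZ, hZZ, Nat.sub_add_cancel hd]
    exact key
  · intro y hy
    have h1 := hX ⟨e y, hes y⟩ ?_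
    · rw [hasChain_subtype, hasChain_subtype] at h1
      change HasChain (f.base ⁻¹' {s}) (e y) d ∧ ¬ HasChain (f.base ⁻¹' {s}) (e y) (d+1) at h1
      rwa [← hr, ← Set.image_univ, HasChain.of_embedding he,
        HasChain.of_embedding he] at h1
    · rintro ⟨x', hx'⟩ hs
      exact Subtype.ext (hgen' y hy x' (hs.map continuous_subtype_val) (hx'.trans (hes y).symm))
  · intro y hy
    obtain ⟨U, hyU, h, hh⟩ := hZ _ hy
    obtain ⟨_, ⟨W, hW, rfl⟩, hcW, hWU⟩ := (f.fiber s).isBasis_affineOpens.exists_subset_of_mem_open 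
      (show y ∈ (e ⁻¹ᵁ U : Set _) from hyU) (e ⁻¹ᵁ U).isOpen
    have hWU' : W ≤ e ⁻¹ᵁ U := hWU
    refine ⟨W, hW, hcW, e.appLE U W hWU' h, fun z hz => ?_⟩
    rw [Set.mem_preimage, hh _ (hWU hz)]
    have h3 : (f.fiber s).basicOpen (e.appLE U W hWU' h) = W ⊓ e ⁻¹ᵁ X.basicOpen h := by
      change (f.fiber s).basicOpen ((f.fiber s).presheaf.map (homOfLE hWU').op (e.app U h)) = _
      rw [Scheme.basicOpen_res, Scheme.preimage_basicOpen]
    rw [h3]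
    exact not_congr ⟨fun h => ⟨hz, h⟩, fun h => h.2⟩
  · intro y hy
    exact hgen _ (hgen' y hy)
  · intro y hy z hz
    exact (hz.map he.continuous).mem_closed hZc hy
  · intro y' hy' hs
    have := hx ⟨e y', hy', hes y'⟩ (IsInducing.subtypeVal.specializes_iff.mp (hs.map he.continuous))
    exact he.injective (congrArg Subtype.val this)

end P7

section P8
open Topology AlgebraicGeometry CategoryTheory

open Polynomial in
/-- elements algebraic over the image of `θ` -/
noncomputable def algSub {A K : Type*} [CommRing A] [Field K] (θ : A →+* K) : Subfield K where
  carrier := {a | IsAlgebraic θ.range a}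
  mul_mem' := fun ha hb => IsAlgebraic.mul ha hb
  one_mem' := isAlgebraic_one
  add_mem' := fun ha hb => IsAlgebraic.add ha hb
  zero_mem' := isAlgebraic_zero
  neg_mem' := fun ha => IsAlgebraic.neg ha
  inv_mem' := fun _ ha => IsAlgebraic.inv ha

open Polynomial in
lemma mem_algSub {A K : Type*} [CommRing A] [Field K] (θ : A →+* K) (a : K) :
    a ∈ algSub θ ↔ ∃ p : A[X], p.map θ ≠ 0 ∧ p.eval₂ θ a = 0 := by
  change IsAlgebraic θ.range a ↔ _
  constructor
  · rintro ⟨p, hp, h⟩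
    obtain ⟨q, rfl⟩ := Polynomial.map_surjective θ.rangeRestrict θ.rangeRestrict_surjective p
    refine ⟨q, ?_, ?_⟩
    · intro h0
      apply hp
      apply Polynomial.map_injective θ.range.subtype Subtype.val_injective
      rw [Polynomial.map_map, Polynomial.map_zero]; exact h0
    · rw [aeval_def, eval₂_map] at h
      exact h
  · rintro ⟨p, hp, h⟩
    refine ⟨p.map θ.rangeRestrict, ?_, ?_⟩
    · intro h0
      apply hp
      have := congrArg (Polynomial.map θ.range.subtype) h0
      rw [Polynomial.map_map, Polynomial.map_zero] at this; exact this
    · rw [aeval_def, eval₂_map]; exact h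

lemma algSub_root {A K : Type*} [CommRing A] [Field K] (θ : A →+* K) (y : K) (m : ℕ) (hm : 0 < m)
    (h : y ^ m ∈ algSub θ) : y ∈ algSub θ := IsAlgebraic.of_pow hm h

open Polynomial in
lemma algSub_quad {A K : Type*} [CommRing A] [Field K] (θ : A →+* K) (y : K) 
    (h : y * (y + 1) ∈ algSub θ) : y ∈ algSub θ := by
  change IsAlgebraic θ.range y
  have hd : (X * (X + 1) : θ.range[X]).natDegree = 2 := by
    have : (X * (X + 1) : θ.range[X]) = X^2 + X := by ring
    rw [this]; compute_degree!
  have hm : (X * (X + 1) : θ.range[X]).Monic := by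
    have : (X + 1 : θ.range[X]) = X + C 1 := by simp
    rw [this]; exact monic_X.mul (monic_X_add_C 1)
  refine IsAlgebraic.of_aeval (X * (X + 1)) (by rw [hd]; norm_num) (by rw [hm.leadingCoeff]; exact one_mem _) ?_
  change IsAlgebraic θ.range (y * (y + 1)) at h
  simpa using h

lemma algSub_θ {A K : Type*} [CommRing A] [Field K] (θ : A →+* K) (a : A) : θ a ∈ algSub θ :=
  isAlgebraic_algebraMap (⟨θ a, a, rfl⟩ : θ.range)

instance {A K : Type*} [CommRing A] [Field K] (θ : A →+* K) : 
    IsIntegrallyClosedIn (algSub θ).toSubring K := by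
  rw [isIntegrallyClosedIn_iff]
  refine ⟨Subtype.val_injective, fun {x} hx => ?_⟩
  suffices x ∈ algSub θ from ⟨⟨x, this⟩, rfl⟩
  have hr : ∀ r : θ.range, (r : K) ∈ algSub θ := by
    rintro ⟨_, a, rfl⟩
    exact algSub_θ θ a
  let Ω : Subalgebra θ.range K := 
    { (algSub θ).toSubring with algebraMap_mem' := hr }
  have h1 : Algebra.IsAlgebraic θ.range Ω := ⟨fun a => by
    have : IsAlgebraic θ.range (a : K) := a.2
    exact (isAlgebraic_algebraMap_iff (A := K) Subtype.val_injective).mp this⟩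
  have h2 : IsAlgebraic Ω x := by
    exact IsIntegral.isAlgebraic (R := Ω) hx
  exact h2.restrictScalars θ.range

lemma val_exists {A K : Type*} [CommRing A] [Field K] (θ : A →+* K) (e : K)
    (h : ∀ V : ValuationSubring K, (∀ a ∈ algSub θ, a ∈ V) → e ∈ V) : e ∈ algSub θ := by
  by_contra he
  obtain ⟨V, hV, hVe⟩ := Subring.exists_le_valuationSubring_of_isIntegrallyClosedIn (R := (algSub θ).toSubring) he
  exact hVe (h V hV)

end P8

section P9
open Topology AlgebraicGeometry CategoryTheory IsLocalRing

lemma germ_scpt {X : Scheme} {R : CommRingCat} [IsLocalRing R] (ℓ : Spec R ⟶ X)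
   (U : X.Opens) (hU : ℓ (closedPoint R) ∈ U) :
   X.presheaf.germ U _ hU ≫ Scheme.stalkClosedPointTo ℓ = 
    ℓ.appLE U ⊤ (Scheme.preimage_eq_top_of_closedPoint_mem ℓ hU).ge ≫ (Scheme.ΓSpecIso R).hom := by
  rw [Scheme.germ_stalkClosedPointTo]
  simp only [Iso.trans_hom, Scheme.Hom.appLE, Category.assoc]
  rfl

lemma germ_spec {X : Scheme} {R K : CommRingCat} [IsLocalRing R] [IsLocalRing K] (α : R ⟶ K) (ℓ : Spec R ⟶ X)
   (g : Spec K ⟶ X) (hg : Spec.map α ≫ ℓ = g)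
   (U : X.Opens) (hU : ℓ (closedPoint R) ∈ U) (hU' : g (closedPoint K) ∈ U) :
   X.presheaf.germ U _ hU ≫ Scheme.stalkClosedPointTo ℓ ≫ α = 
    X.presheaf.germ U _ hU' ≫ Scheme.stalkClosedPointTo g := by
  subst hg
  have h1 := germ_scpt ℓ U hU
  have h2 := germ_scpt (Spec.map α ≫ ℓ) U hU'
  rw [h2, ← Category.assoc, h1, Category.assoc, ← Scheme.ΓSpecIso_naturality, ← Category.assoc]
  have h3 : (Spec.map α).appTop = (Spec.map α).appLE ⊤ ⊤ le_top := (Scheme.Hom.appLE_eq_app _).symm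
  exact congrArg (· ≫ (Scheme.ΓSpecIso K).hom) ((congrArg (_ ≫ ·) h3).trans (Scheme.Hom.appLE_comp_appLE _ _ _ _ _ _ _))

lemma germ_residue_spec {X : Scheme} (x : X) {R : CommRingCat} [IsLocalRing R] (α : R ⟶ X.residueField x) (ℓ : Spec R ⟶ X)
   (hg : Spec.map α ≫ ℓ = X.fromSpecResidueField x)
   (U : X.Opens) (hU : ℓ (closedPoint R) ∈ U) (hU' : x ∈ U) (a : Γ(X, U)) :
   α (Scheme.stalkClosedPointTo ℓ (X.presheaf.germ U _ hU a)) = X.evaluation U x hU' a := by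
  have hx : X.fromSpecResidueField x (closedPoint (X.residueField x)) ∈ U := by
    have h := Scheme.fromSpecResidueField_apply x (closedPoint (X.residueField x))
    exact Set.mem_of_eq_of_mem h hU'
  have h1 := germ_spec α ℓ _ hg U hU hx
  have : IsLocalHom (X.residue x).hom := inferInstanceAs (IsLocalHom (IsLocalRing.residue (X.presheaf.stalk x)))
  have h2 := Scheme.germ_stalkClosedPointTo_Spec_fromSpecStalk (X.residue x) U hx
  have h3 := h1.trans h2
  exact congrArg (fun φ => φ.hom a) h3

/-- the structure map to the residue field -/
noncomputable def th {X S : Scheme} (f : X ⟶ S) (x : X) : Γ(S, ⊤) →+* X.residueField x :=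
  (f.appTop ≫ X.Γevaluation x).hom

lemma th_ne_zero {X S : Scheme} (f : X ⟶ S) (x : X) (a : Γ(S, ⊤)) : th f x a ≠ 0 ↔ f x ∈ S.basicOpen a := by
  have h : th f x a = X.Γevaluation x (f.appTop a) := rfl
  rw [h, ← Scheme.Γevaluation_naturality_apply, ← Scheme.evaluation_ne_zero_iff_mem_basicOpen S (U := ⊤) (f x) trivial]
  exact not_congr (map_eq_zero_iff (f.residueFieldMap x).hom (f.residueFieldMap x).hom.injective)

lemma eq_of_basicOpen {S : Scheme} [IsAffine S] (s t : S) 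
    (h : ∀ a : Γ(S, ⊤), s ∈ S.basicOpen a ↔ t ∈ S.basicOpen a) : s = t := by
  have hB := isBasis_basicOpen S
  apply Inseparable.eq
  rw [inseparable_iff_forall_isOpen]
  have key : ∀ (s t : S), (∀ a : Γ(S, ⊤), s ∈ S.basicOpen a ↔ t ∈ S.basicOpen a) → ∀ U : Set S, IsOpen U →
      s ∈ U → t ∈ U := by
    intro s t h U hU hs
    obtain ⟨_, ⟨_, ⟨a, rfl⟩, rfl⟩, h1, h2⟩ := hB.exists_subset_of_mem_open hs hU
    exact h2 ((h a).mp h1)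
  exact fun U hU => ⟨key s t h U hU, key t s (fun a => (h a).symm) U hU⟩

lemma th_spec {X S : Scheme} [IsAffine S] (f : X ⟶ S) (x : X) : 
   X.fromSpecResidueField x ≫ f = Spec.map (CommRingCat.ofHom (th f x)) ≫ S.isoSpec.inv := by
  rw [Iso.eq_comp_inv]
  have h1 : f ≫ S.isoSpec.hom = X.toSpecΓ ≫ Spec.map f.appTop := Scheme.toSpecΓ_naturality f
  have h2 : X.fromSpecResidueField x ≫ X.toSpecΓ = Spec.map (X.Γevaluation x) := by
    simp [Scheme.fromSpecResidueField, Scheme.fromSpecStalk_toSpecΓ, ← Spec.map_comp]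
    rfl
  rw [Category.assoc, h1, reassoc_of% h2, ← Spec.map_comp]
  rfl

theorem VAL {X S : Scheme} [IsAffine S] (f : X ⟶ S) [IsProper f] (x : X) (V : ValuationSubring (X.residueField x))
   (hV : ∀ a ∈ algSub (th f x), a ∈ V) : ∃ z : X, x ⤳ z ∧ f z = f x ∧ 
    ∀ (U : X.Opens) (_ : z ∈ U) (hx : x ∈ U) (a : Γ(X, U)), X.evaluation U x hx a ∈ V ∧ 
     (z ∈ X.basicOpen a ↔ X.evaluation U x hx a ≠ 0 ∧ (X.evaluation U x hx a)⁻¹ ∈ V) := by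
  have hval : ValuativeCriterion f := by
    have : IsProper f := inferInstance
    rw [IsProper.eq_valuativeCriterion] at this
    exact this.1.1.1
  let θ : Γ(S, ⊤) →+* V := (th f x).codRestrict V.toSubring (fun a => hV _ (algSub_θ _ a))
  let sq : ValuativeCommSq f :=
   { R := V
     K := X.residueField x
     i₁ := X.fromSpecResidueField x
     i₂ := Spec.map (CommRingCat.ofHom θ) ≫ S.isoSpec.inv
     commSq := ⟨by
       rw [th_spec]
       rw [← Spec.map_comp_assoc]; rfl⟩ }
  obtain ⟨ℓ, h1, h2⟩ := (hval.existence sq).exists_lift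
  let α : CommRingCat.of V ⟶ X.residueField x := CommRingCat.ofHom (algebraMap V (X.residueField x))
  have h1 : Spec.map α ≫ ℓ = X.fromSpecResidueField x := h1
  let z := ℓ (closedPoint V)
  have hxz : x ⤳ z := by
    have e := Scheme.fromSpecResidueField_apply x (closedPoint (X.residueField x))
    rw [← h1] at e
    have h3 := (IsLocalRing.specializes_closedPoint ((Spec.map α) (closedPoint (X.residueField x)))).map ℓ.continuous
    exact (specializes_of_eq e.symm).trans h3
  have key : ∀ (U : X.Opens) (_ : z ∈ U) (hx : x ∈ U) (a : Γ(X, U)), X.evaluation U x hx a ∈ V ∧ 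
     (z ∈ X.basicOpen a ↔ X.evaluation U x hx a ≠ 0 ∧ (X.evaluation U x hx a)⁻¹ ∈ V) := by
    intro U hz hx a
    have h3 := germ_residue_spec x α ℓ h1 U hz hx a
    rw [← h3]
    refine ⟨Subtype.property (p := fun y => y ∈ V) _, ?_⟩
    rw [Scheme.mem_basicOpen _ _ _ hz]
    have h4 : IsUnit (X.presheaf.germ U z hz a) ↔ IsUnit (Scheme.stalkClosedPointTo ℓ (X.presheaf.germ U z hz a)) := 
      (isUnit_map_iff (Scheme.stalkClosedPointTo ℓ).hom _).symm
    rw [h4]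
    generalize Scheme.stalkClosedPointTo ℓ (X.presheaf.germ U z hz a) = v
    change V at v
    change IsUnit v ↔ (v : X.residueField x) ≠ 0 ∧ (v : X.residueField x)⁻¹ ∈ V
    constructor
    · rintro ⟨u, rfl⟩
      have h5 : ((u : V) : X.residueField x) * ((u⁻¹ : Vˣ) : V) = 1 := by
        rw [← MulMemClass.coe_mul, u.mul_inv]; rfl
      refine ⟨left_ne_zero_of_mul_eq_one h5, ?_⟩
      rw [← eq_inv_of_mul_eq_one_right h5]; exact Subtype.property _
    · rintro ⟨h5, h6⟩
      exact IsUnit.of_mul_eq_one ⟨_, h6⟩ (Subtype.ext (mul_inv_cancel₀ h5))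
  refine ⟨z, hxz, ?_, key⟩
  apply eq_of_basicOpen
  intro a
  rw [← th_ne_zero f x]
  have h3 := (key ⊤ trivial trivial (f.appTop a)).2
  have h4 : z ∈ X.basicOpen (f.appTop a) ↔ f z ∈ S.basicOpen a := by
    have := Scheme.preimage_basicOpen_top f a
    rw [← this]; rfl
  rw [← h4, h3]
  exact ⟨fun h => h.1, fun h => ⟨h, hV _ ((algSub (th f x)).inv_mem (algSub_θ (th f x) a))⟩⟩

end P9

section P10
open Topology AlgebraicGeometry CategoryTheory IsLocalRing Polynomial

lemma ev_res {X : Scheme} {U V : X.Opens} (h : V ≤ U) (a : Γ(X, U)) (x : X) (hx : x ∈ V) :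
    X.evaluation V x hx (res X h a) = X.evaluation U x (h hx) a := by
  have : X.presheaf.map (homOfLE h).op ≫ X.presheaf.germ V x hx = X.presheaf.germ U x (h hx) :=
    TopCat.Presheaf.germ_res _ _ _ _
  exact congrArg (fun φ => X.residue x (φ.hom a)) this

lemma ev_appLE {X S : Scheme} (f : X ⟶ S) (O : X.Opens) (x : X) (hx : x ∈ O) (a : Γ(S, ⊤)) :
    X.evaluation O x hx (f.appLE ⊤ O le_top a) = th f x a := 
  ev_res (U := ⊤) le_top (f.appTop a) x hx

lemma isUnit_germ_iff {X : Scheme} {U : X.Opens} (a : Γ(X, U)) (x : X) (hx : x ∈ U) :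
    IsUnit (X.presheaf.germ U x hx a) ↔ X.evaluation U x hx a ≠ 0 := by
  rw [Scheme.evaluation_ne_zero_iff_mem_basicOpen, Scheme.mem_basicOpen _ _ _ hx]

lemma ev_unit {X : Scheme} {U : X.Opens} (a : Γ(X, U)) (h : IsUnit a) (x : X) (hx : x ∈ U) :
    X.evaluation U x hx a ≠ 0 := (h.map (X.evaluation U x hx).hom).ne_zero

lemma pow_trans {X : Scheme} {L : LineBundle X} {n : ℕ} {V : X.Opens} (t : L.PowSectionOn n V) (x : X) (hV : x ∈ V) (i j)
    (hi : x ∈ L.U i) (hj : x ∈ L.U j) : X.evaluation (V ⊓ L.U i) x ⟨hV, hi⟩ (t.s i) = 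
      X.evaluation (L.U i ⊓ L.U j) x ⟨hi, hj⟩ (L.g i j) ^ n * X.evaluation (V ⊓ L.U j) x ⟨hV, hj⟩ (t.s j) := by
  have := congrArg (X.evaluation _ x (show x ∈ V ⊓ (L.U i ⊓ L.U j) from ⟨hV, hi, hj⟩)) (t.compat i j)
  rw [map_mul, map_pow, ev_res, ev_res, ev_res] at this
  exact this

lemma g_trans {X : Scheme} {L : LineBundle X} (t : L.GSection) (x : X) (i j)
    (hi : x ∈ L.U i) (hj : x ∈ L.U j) : X.evaluation _ x hi (t.s i) = 
      X.evaluation (L.U i ⊓ L.U j) x ⟨hi, hj⟩ (L.g i j) * X.evaluation _ x hj (t.s j) := by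
  have := congrArg (X.evaluation _ x (show x ∈ (L.U i ⊓ L.U j) from ⟨hi, hj⟩)) (t.compat i j)
  rw [map_mul, ev_res, ev_res] at this
  exact this

lemma mem_unitLocus {X : Scheme} {L : LineBundle X} {n : ℕ} {V : X.Opens} (t : L.PowSectionOn n V) (x : X) (hV : x ∈ V) (i)
    (hi : x ∈ L.U i) : x ∈ t.unitLocus ↔ X.evaluation (V ⊓ L.U i) x ⟨hV, hi⟩ (t.s i) ≠ 0 := by
  constructor
  · rintro ⟨j, _, hj, h⟩
    have h := (isUnit_germ_iff (U := V ⊓ L.U j) _ _ _).mp h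
    rw [pow_trans t x hV i j hi hj]
    exact mul_ne_zero (pow_ne_zero _ (ev_unit _ (L.isUnit i j) _ _)) h
  · intro h
    exact ⟨i, hV, hi, (isUnit_germ_iff _ _ _).mpr h⟩

lemma alg_const {A K : Type*} [CommRing A] [Field K] (θ : A →+* K) (b : K) (hb : b ≠ 0) (N : ℕ) : 
   ∀ p : A[X], p.natDegree ≤ N → p.map θ ≠ 0 → p.eval₂ θ b = 0 → ∃ p : A[X], θ (p.coeff 0) ≠ 0 ∧ p.eval₂ θ b = 0 := by
  induction N with
  | zero => 
    intro p hp h1 h2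
    refine ⟨p, ?_, h2⟩
    intro h0
    apply h1
    rw [Polynomial.eq_C_of_natDegree_le_zero hp, map_C, h0, C_0]
  | succ N ih =>
    intro p hp h1 h2
    by_cases h0 : θ (p.coeff 0) = 0
    · have e := divX_mul_X_add p
      apply ih p.divX
      · rw [natDegree_divX_eq_natDegree_tsub_one]; omega
      · intro h
        apply h1
        rw [← e, Polynomial.map_add, Polynomial.map_mul, h, map_C, h0]; simp
      · rw [← e, eval₂_add, eval₂_mul, eval₂_X, eval₂_C, h0, add_zero] at h2
        exact (mul_eq_zero.mp h2).resolve_right hb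
    · exact ⟨p, h0, h2⟩

lemma exists_spec {X S : Scheme} (f : X ⟶ S) (d : ℕ) (hd : 1 ≤ d) (hdim : PureRelativeDimension f d) (x : X)
   (hx : x ∈ GP f) : ∃ y, y ≠ x ∧ x ⤳ y ∧ f y = f x := by
  have := quasiSober_fiber f (f x)
  have h := (pure_iff (X := ↥(f.base ⁻¹' {f x} : Set X)) (n := d)).mp (hdim (f x)) ⟨x, rfl⟩ (by
    rintro ⟨x', hx'⟩ h
    exact Subtype.ext (hx x' (by simpa [subtype_specializes_iff] using h) hx'))
  obtain ⟨⟨c, hc1, hc2⟩, -⟩ := h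
  have h0 := hc2 0 (by omega)
  by_cases h : (c 0 : X) = x
  · refine ⟨c 1, ?_, ?_, (c 1).2⟩
    · intro e; exact h0.2 (Subtype.ext (h.trans e.symm))
    · have := (hc1 1 hd).2; simpa [subtype_specializes_iff] using this
  · refine ⟨c 0, h, ?_, (c 0).2⟩
    have := (hc1 0 (by omega)).2; simpa [subtype_specializes_iff] using this


end P10

section P11
open Topology AlgebraicGeometry CategoryTheory IsLocalRing Polynomial

lemma no_const {X S : Scheme} (f : X ⟶ S) (x y : X) (O : X.Opens) (hO : IsAffineOpen O)
   (hxO : x ∈ O) (hyO : y ∈ O) (hne : y ≠ x) (hxy : x ⤳ y) (hf : f y = f x)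
   (H : ∀ b : Γ(X, O), X.evaluation O x hxO b ∈ algSub (th f x)) : False := by
  have hns : ¬ y ⤳ x := fun h => hne (h.antisymm hxy).eq
  obtain ⟨b, hb1, hb2⟩ := hO.exists_basicOpen_le (V := ⟨(closure {y})ᶜ, isClosed_closure.isOpen_compl⟩)
    ⟨x, fun h => hns (specializes_iff_mem_closure.mpr h)⟩ hxO
  have hyb : y ∉ X.basicOpen b := fun h => hb1 h (subset_closure rfl)
  have hxb := (X.evaluation_ne_zero_iff_mem_basicOpen x hxO b).mpr hb2
  have hyb' := (X.evaluation_eq_zero_iff_notMem_basicOpen y hyO b).mpr hyb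
  obtain ⟨p, hp1, hp2⟩ := (mem_algSub _ _).mp (H b)
  obtain ⟨p, hp1, hp2⟩ := alg_const _ _ hxb _ p le_rfl hp1 hp2
  have key : ∀ (x : X) (hx : x ∈ O), X.evaluation O x hx (p.eval₂ (f.appLE ⊤ O le_top).hom b) = 
     p.eval₂ (th f x) (X.evaluation O x hx b) := by
    intro x hx
    have := Polynomial.hom_eval₂ p (f.appLE ⊤ O le_top).hom (X.evaluation O x hx).hom b
    refine this.trans ?_
    congr 1
    ext a
    exact ev_appLE f O x hx a
  have h1 : x ∉ X.basicOpen (p.eval₂ (f.appLE ⊤ O le_top).hom b) := by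
    rw [← X.evaluation_eq_zero_iff_notMem_basicOpen x hxO, key, hp2]
  have h2 : y ∉ X.basicOpen (p.eval₂ (f.appLE ⊤ O le_top).hom b) := fun h => 
    h1 (hxy.mem_open (X.basicOpen _).isOpen h)
  rw [← X.evaluation_eq_zero_iff_notMem_basicOpen y hyO, key, hyb', eval₂_at_zero] at h2
  rw [th_ne_zero, ← hf, ← th_ne_zero] at hp1
  exact hp1 h2

theorem pos_core {X S : Scheme} [IsAffine S] (f : X ⟶ S) [IsProper f] (d : ℕ) (hd : 1 ≤ d) (hdim : PureRelativeDimension f d)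
    (L : LineBundle X) (hample : IsRelativelyAmple f L) (r : ℕ) (T : Fin r → L.GSection)
    (hT : ∀ (i : L.ι) (x : X) (hx : x ∈ L.U i),
      ∃ k, IsUnit (X.presheaf.germ (L.U i) x hx ((T k).s i))) (x : X) (hx : x ∈ GP f) (i) (hi : x ∈ L.U i) :
    ∃ a b, X.evaluation _ x hi ((T b).s i) ≠ 0 ∧ 
      X.evaluation _ x hi ((T a).s i) / X.evaluation _ x hi ((T b).s i) ∉ algSub (th f x) := by
  by_contra hcon
  push Not at hcon
  obtain ⟨y, hyx, hxy, hfy⟩ := exists_spec f d hd hdim x hx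
  obtain ⟨W, -, hyW, n, -, t, ho, hyO, hO⟩ := hample y
  have hxO : x ∈ t.unitLocus := hxy.mem_open ho hyO
  obtain ⟨j0, hj0⟩ := hT i x hi
  rw [isUnit_germ_iff] at hj0
  have hfyW : f y ∈ W := hyW
  have hxW : x ∈ f ⁻¹ᵁ W := by
    change f x ∈ W
    rw [← hfy]; exact hyW
  have hti := (mem_unitLocus t x hxW i hi).mp hxO
  refine no_const f x y ⟨t.unitLocus, ho⟩ hO hxO hyO hyx hxy hfy ?_
  -- for a valuation ring get data
  have data : ∀ V : ValuationSubring (X.residueField x), (∀ a ∈ algSub (th f x), a ∈ V) →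
      ∃ z : X, ∃ τ σ ρ : X.residueField x, τ ∈ V ∧ (τ⁻¹ ∈ V → z ∈ t.unitLocus) ∧ σ⁻¹ ∈ V ∧ σ ≠ 0 ∧ τ ≠ 0 ∧
        ρ ≠ 0 ∧ σ / ρ ∈ V ∧ 
        X.evaluation (f ⁻¹ᵁ W ⊓ L.U i) x ⟨hxW, hi⟩ (t.s i) / X.evaluation _ x hi ((T j0).s i) ^ n = τ / ρ ^ n ∧
        (z ∈ t.unitLocus → ∀ b : Γ(X, ⟨t.unitLocus, ho⟩), X.evaluation ⟨t.unitLocus, ho⟩ x hxO b ∈ V) := by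
    intro V hV
    obtain ⟨z, hxz, hfz, key⟩ := VAL f x V hV
    obtain ⟨i0, hzi0⟩ := L.covers z
    have hxi0 : x ∈ L.U i0 := hxz.mem_open (L.U i0).isOpen hzi0
    have hzW : z ∈ f ⁻¹ᵁ W := by
      change f z ∈ W
      rw [hfz]; exact hxW
    obtain ⟨k, hk⟩ := hT i0 z hzi0
    have hk' : z ∈ X.basicOpen ((T k).s i0) := (Scheme.mem_basicOpen _ _ _ hzi0).mpr hk
    have hkV := (key _ hzi0 hxi0 ((T k).s i0)).2.mp hk'
    have hg := ev_unit _ (L.isUnit i i0) x ⟨hi, hxi0⟩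
    have htr0 := g_trans (T j0) x i i0 hi hxi0
    have hρ : X.evaluation _ x hxi0 ((T j0).s i0) ≠ 0 := by
      intro h; apply hj0; rw [htr0, h, mul_zero]
    have htrt := pow_trans t x hxW i i0 hi hxi0
    have htrk := g_trans (T k) x i i0 hi hxi0
    have hτ0 := (mem_unitLocus t x hxW i0 hxi0).mp hxO
    refine ⟨z, X.evaluation (f ⁻¹ᵁ W ⊓ L.U i0) x ⟨hxW, hxi0⟩ (t.s i0), X.evaluation _ x hxi0 ((T k).s i0), 
      X.evaluation _ x hxi0 ((T j0).s i0), (key (f ⁻¹ᵁ W ⊓ L.U i0) ⟨hzW, hzi0⟩ ⟨hxW, hxi0⟩ _).1, ?_, hkV.2, hkV.1, 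
      hτ0, hρ, ?_, ?_, ?_⟩
    · intro h
      have := (key (f ⁻¹ᵁ W ⊓ L.U i0) ⟨hzW, hzi0⟩ ⟨hxW, hxi0⟩ (t.s i0)).2.mpr ⟨hτ0, h⟩
      exact ⟨i0, hzW, hzi0, (Scheme.mem_basicOpen _ _ _ _).mp this⟩
    · have := hV _ (hcon k j0 hj0)
      rwa [htrk, htr0, mul_div_mul_left _ _ hg] at this
    · rw [htrt, htr0, mul_pow, mul_div_mul_left _ _ (pow_ne_zero _ hg)]
    · intro h b
      exact (key ⟨t.unitLocus, ho⟩ h hxO b).1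
  have he : X.evaluation (f ⁻¹ᵁ W ⊓ L.U i) x ⟨hxW, hi⟩ (t.s i) / X.evaluation _ x hi ((T j0).s i) ^ n ∈ algSub (th f x) := by
    apply val_exists
    intro V hV
    obtain ⟨z, τ, σ, ρ, h1, h2, h3, h4, h5, h6, h7, h8, h9⟩ := data V hV
    rw [h8]
    have : τ / ρ ^ n = τ * (σ⁻¹) ^ n * (σ / ρ) ^ n := by
      rw [div_pow, inv_pow]; field_simp
    rw [this]
    exact V.mul_mem _ _ (V.mul_mem _ _ h1 (pow_mem h3 n)) (pow_mem h7 n)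
  intro b
  apply val_exists
  intro V hV
  have he' := hV _ ((algSub (th f x)).inv_mem he)
  obtain ⟨z, τ, σ, ρ, h1, h2, h3, h4, h5, h6, h7, h8, h9⟩ := data V hV
  rw [h8] at he'
  apply h9
  apply h2
  have : τ⁻¹ = (τ / ρ ^ n)⁻¹ * (σ⁻¹) ^ n * (σ / ρ) ^ n := by
    rw [div_pow, inv_pow]; field_simp
  rw [this]
  exact V.mul_mem _ _ (V.mul_mem _ _ he' (pow_mem h3 n)) (pow_mem h7 n)

end P11

section P12
open Topology AlgebraicGeometry CategoryTheory IsLocalRing Polynomial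

lemma exists_pt {X : Scheme} {D : X.Opens} (hD : IsAffineOpen D) (q : Ideal Γ(X, D)) (hq : q.IsPrime) : 
   ∃ x ∈ D, ∀ a : Γ(X, D), x ∈ X.basicOpen a ↔ a ∉ q := by
  let y : Spec Γ(X, D) := (⟨q, hq⟩ : PrimeSpectrum Γ(X, D))
  refine ⟨hD.fromSpec y, ?_, ?_⟩
  · have : hD.fromSpec y ∈ Set.range hD.fromSpec := ⟨y, rfl⟩
    rw [hD.range_fromSpec] at this
    exact this
  · intro a
    have := hD.fromSpec_preimage_basicOpen a
    have h : y ∈ hD.fromSpec ⁻¹ᵁ X.basicOpen a ↔ a ∉ q := by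
      rw [this]; rfl
    exact h

lemma mem_ker_ev {X : Scheme} {D : X.Opens} (x : X) (hx : x ∈ D) (a : Γ(X, D)) : 
   a ∈ RingHom.ker (X.evaluation D x hx).hom ↔ x ∉ X.basicOpen a := 
  X.evaluation_eq_zero_iff_notMem_basicOpen x hx a

lemma minFib {X S : Scheme} [IsAffine S] (f : X ⟶ S) {D : X.Opens} (hD : IsAffineOpen D)  (x : X) (hx : x ∈ D) (hG : x ∈ GP f) :
   letI := (f.appLE ⊤ D le_top).hom.toAlgebra
   MinFib Γ(S, ⊤) (RingHom.ker (X.evaluation D x hx).hom) := by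
  let := (f.appLE ⊤ D le_top).hom.toAlgebra
  intro q' hq' hle hc
  obtain ⟨x', hx', hb⟩ := exists_pt hD q' hq'
  have hs : x' ⤳ x := by
    rw [specializes_iff_forall_open]
    intro U hU hxU
    obtain ⟨b, hb1, hb2⟩ := hD.exists_basicOpen_le (V := ⟨U, hU⟩) ⟨x, hxU⟩ hx
    apply hb1
    rw [hb]
    intro h
    exact (mem_ker_ev x hx b).mp (hle h) hb2
  have hf : f x' = f x := by
    apply eq_of_basicOpen
    intro a
    rw [← th_ne_zero, ← th_ne_zero, ← ev_appLE f D x' hx', ← ev_appLE f D x hx]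
    rw [Scheme.evaluation_ne_zero_iff_mem_basicOpen, hb]
    refine not_congr ⟨fun h => hle h, fun h => hc a h⟩
  have e := hG x' hs hf
  ext a
  rw [mem_ker_ev, ← e, hb, not_not]

lemma algAt_ev {X S : Scheme} (f : X ⟶ S) {D : X.Opens} (x : X) (hx : x ∈ D) (b : Γ(X, D)) :
   letI := (f.appLE ⊤ D le_top).hom.toAlgebra
   AlgAt Γ(S, ⊤) (RingHom.ker (X.evaluation D x hx).hom) b ↔ X.evaluation D x hx b ∈ algSub (th f x) := by
  let := (f.appLE ⊤ D le_top).hom.toAlgebra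
  rw [mem_algSub]
  refine exists_congr fun p => and_congr ?_ ?_
  · rw [Ne, Polynomial.ext_iff, not_forall]
    refine exists_congr fun i => not_congr ?_
    rw [coeff_map, coeff_zero, ← ev_appLE f D x hx]
    rfl
  · rw [RingHom.mem_ker, Polynomial.aeval_def, Polynomial.hom_eval₂]
    have : (X.evaluation D x hx).hom.comp (algebraMap Γ(S, ⊤) Γ(X, D)) = th f x := by
      ext a
      exact ev_appLE f D x hx a
    rw [this]

lemma BD {X S : Scheme} [IsAffine S] [IsNoetherian S] (f : X ⟶ S) [LocallyOfFiniteType f] {D : X.Opens} (hD : IsAffineOpen D)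
  (u g : Γ(X, D)) : ∃ N, ∀ n ≥ N, ∀ x ∈ GP f, ∀ hx : x ∈ D, 
    X.evaluation D x hx u ^ n + X.evaluation D x hx g ∈ algSub (th f x) → X.evaluation D x hx u ∈ algSub (th f x) := by
  let := (f.appLE ⊤ D le_top).hom.toAlgebra
  have : IsNoetherianRing Γ(S, ⊤) := IsLocallyNoetherian.component_noetherian ⟨⊤, isAffineOpen_top S⟩
  have : Algebra.FiniteType Γ(S, ⊤) Γ(X, D) := f.finiteType_appLE (isAffineOpen_top S) hD le_top
  obtain ⟨N, hN⟩ := bound (A := Γ(S, ⊤)) u g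
  refine ⟨N, fun n hn x hG hx h => ?_⟩
  have := hN n hn _ (RingHom.ker_isPrime _) (minFib f hD x hx hG)
  rw [algAt_ev, algAt_ev] at this
  apply this
  rwa [map_add, map_pow]

lemma BD2 {X S : Scheme} [IsAffine S] [IsNoetherian S] (f : X ⟶ S) [LocallyOfFiniteType f] {D : X.Opens} (hD : IsAffineOpen D)
  (a h c : Γ(X, D)) (b : ℕ) : ∃ N, ∀ n ≥ N, ∀ x ∈ GP f, ∀ hx : x ∈ D, X.evaluation D x hx h ≠ 0 →
    (X.evaluation D x hx a / X.evaluation D x hx h) ^ n + X.evaluation D x hx c / X.evaluation D x hx h ^ b ∈ algSub (th f x) → 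
    X.evaluation D x hx a / X.evaluation D x hx h ∈ algSub (th f x) := by
  have hle := X.basicOpen_le h
  have hu : IsUnit (res X hle h) := by
    exact RingedSpace.isUnit_res_basicOpen _ h
  obtain ⟨v, hv⟩ := hu.exists_left_inv
  obtain ⟨N, hN⟩ := BD f (hD.basicOpen h) (res X hle a * v) (res X hle c * v ^ b)
  refine ⟨N, fun n hn x hG hx hh => ?_⟩
  have hx' : x ∈ X.basicOpen h := (X.evaluation_ne_zero_iff_mem_basicOpen x hx h).mp hh
  have := hN n hn x hG hx'
  have e := congrArg (X.evaluation _ x hx') hv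
  rw [map_mul, map_one, ev_res] at e
  have e' := eq_inv_of_mul_eq_one_left e
  simpa [map_mul, map_pow, ev_res, e', div_eq_mul_inv] using this


end P12

section P13
open Topology AlgebraicGeometry CategoryTheory IsLocalRing

section resl
variable {X : Scheme} {U V : X.Opens} (h : V ≤ U)
lemma res_add (a b : Γ(X, U)) : res X h (a + b) = res X h a + res X h b := map_add (X.presheaf.map (homOfLE h).op).hom a b
lemma res_mul (a b : Γ(X, U)) : res X h (a * b) = res X h a * res X h b := map_mul (X.presheaf.map (homOfLE h).op).hom a b
lemma res_pow (a : Γ(X, U)) (n : ℕ) : res X h (a ^ n) = res X h a ^ n := map_pow (X.presheaf.map (homOfLE h).op).hom a n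
lemma res_zero : res X h (0 : Γ(X, U)) = 0 := map_zero (X.presheaf.map (homOfLE h).op).hom
lemma res_one : res X h (1 : Γ(X, U)) = 1 := map_one (X.presheaf.map (homOfLE h).op).hom
lemma res_res {W : X.Opens} (h' : W ≤ V) (a : Γ(X, U)) : res X h' (res X h a) = res X (h'.trans h) a := by
  unfold res
  rw [← CommRingCat.comp_apply, ← Functor.map_comp]
  rfl
lemma germ_res' (x : X) (hx : x ∈ V) (a : Γ(X, U)) : X.presheaf.germ V x hx (res X h a) = X.presheaf.germ U x (h hx) a := by
  have : X.presheaf.map (homOfLE h).op ≫ X.presheaf.germ V x hx = X.presheaf.germ U x (h hx) :=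
    TopCat.Presheaf.germ_res _ _ _ _
  exact congrArg (fun φ => φ.hom a) this
end resl

/-- homogeneous sections of degree n -/
def Sn {X : Scheme} (L : LineBundle X) (n : ℕ) : Set (∀ i, Γ(X, L.U i)) :=
  {s | ∀ i j, res X (inf_le_left : L.U i ⊓ L.U j ≤ L.U i) (s i) = L.g i j ^ n * res X inf_le_right (s j)}

lemma exists_cover {X : Scheme} [CompactSpace X] (L : LineBundle X) : ∃ (m : ℕ) (V : Fin m → X.Opens) (i : Fin m → L.ι),
   (∀ j, IsAffineOpen (V j)) ∧ (∀ j, V j ≤ L.U (i j)) ∧ ∀ x, ∃ j, x ∈ V j := by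
  have h : ∀ x : X, ∃ (V : X.Opens) (i : L.ι), IsAffineOpen V ∧ V ≤ L.U i ∧ x ∈ V := by
    intro x
    obtain ⟨i, hi⟩ := L.covers x
    obtain ⟨_, ⟨V, hV, rfl⟩, hx, hle⟩ := X.isBasis_affineOpens.exists_subset_of_mem_open hi (L.U i).isOpen
    exact ⟨V, i, hV, hle, hx⟩
  choose V i h1 h2 h3 using h
  obtain ⟨t, ht⟩ := isCompact_univ.elim_finite_subcover (fun x => (V x : Set X)) (fun x => (V x).isOpen) 
    (fun x _ => Set.mem_iUnion.mpr ⟨x, h3 x⟩)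
  refine ⟨t.card, fun j => V (t.equivFin.symm j), fun j => i (t.equivFin.symm j), fun j => h1 _, fun j => h2 _, fun x => ?_⟩
  obtain ⟨y, hy⟩ := Set.mem_iUnion.mp (ht (Set.mem_univ x))
  obtain ⟨hy, hx⟩ := Set.mem_iUnion.mp hy
  exact ⟨t.equivFin ⟨y, hy⟩, by simpa using hx⟩

lemma s_trans {X : Scheme} {L : LineBundle X} {n : ℕ} {F : ∀ i, Γ(X, L.U i)} (hF : F ∈ Sn L n) (x : X) (i j)
    (hi : x ∈ L.U i) (hj : x ∈ L.U j) : X.evaluation _ x hi (F i) = 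
      X.evaluation (L.U i ⊓ L.U j) x ⟨hi, hj⟩ (L.g i j) ^ n * X.evaluation _ x hj (F j) := by
  have := congrArg (X.evaluation _ x (show x ∈ (L.U i ⊓ L.U j) from ⟨hi, hj⟩)) (hF i j)
  rw [map_mul, map_pow, ev_res, ev_res] at this
  exact this

lemma s_ne {X : Scheme} {L : LineBundle X} {n : ℕ} {F : ∀ i, Γ(X, L.U i)} (hF : F ∈ Sn L n) (x : X) (i j)
    (hi : x ∈ L.U i) (hj : x ∈ L.U j) (h : X.evaluation _ x hj (F j) ≠ 0) : X.evaluation _ x hi (F i) ≠ 0 := by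
  rw [s_trans hF x i j hi hj]
  exact mul_ne_zero (pow_ne_zero _ (ev_unit _ (L.isUnit i j) _ _)) h

/-- the power section attached to a homogeneous element -/
noncomputable def toPow {X : Scheme} {L : LineBundle X} {n : ℕ} {F : ∀ i, Γ(X, L.U i)} (hF : F ∈ Sn L n) : L.PowSectionOn n ⊤ where
  s i := res X inf_le_right (F i)
  compat i j := by
    have := congrArg (res X (inf_le_right : ⊤ ⊓ (L.U i ⊓ L.U j) ≤ L.U i ⊓ L.U j)) (hF i j)
    rw [res_mul, res_pow, res_res, res_res] at this
    rw [res_res, res_res]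
    exact this

/-- the avoidance datum -/
noncomputable def mkAv {X S : Scheme} [IsAffine S] [AlgebraicGeometry.IsNoetherian S] (f : X ⟶ S) [IsProper f] 
    (d : ℕ) (hd : 1 ≤ d) (hdim : PureRelativeDimension f d)
    (L : LineBundle X) (hample : IsRelativelyAmple f L) (r : ℕ) (T : Fin r → L.GSection)
    (hT : ∀ (i : L.ι) (x : X) (hx : x ∈ L.U i),
      ∃ k, IsUnit (X.presheaf.germ (L.U i) x hx ((T k).s i)))
    {m : ℕ} (V : Fin m → X.Opens) (i : Fin m → L.ι) (hV : ∀ j, IsAffineOpen (V j)) (hle : ∀ j, V j ≤ L.U (i j)) 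
    (j : X → Fin m) (hj : ∀ x, x ∈ V (j x)) : 
    Av (∀ i, Γ(X, L.U i)) X (fun x => X.residueField x) where
  S := Sn L
  zero_mem n := by intro i j; simp [res_zero]
  one_mem := by intro i j; simp [res_one]
  add_mem := by
    intro n a b ha hb i j
    rw [Pi.add_apply, Pi.add_apply, res_add, res_add, ha i j, hb i j, mul_add]
  mul_mem := by
    intro n m a b ha hb i j
    rw [Pi.mul_apply, Pi.mul_apply, res_mul, res_mul, ha i j, hb i j, pow_add]
    ring
  ev x := (X.evaluation _ x (hle _ (hj x))).hom.comp (Pi.evalRingHom (fun i => Γ(X, L.U i)) (i (j x)))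
  G := GP f
  k x := algSub (th f x)
  root x y m hm h := algSub_root _ y m hm h
  quad x y h := algSub_quad _ y h
  bd a h c b := by
    have H := fun jj => BD2 f (hV jj) (res X (hle jj) (a (i jj))) (res X (hle jj) (h (i jj))) (res X (hle jj) (c (i jj))) b
    choose N hN using H
    refine ⟨Finset.univ.sup N, fun n hn x hG => ?_⟩
    have := hN (j x) n ((Finset.le_sup (Finset.mem_univ (j x))).trans hn) x hG (hj x)
    rw [ev_res, ev_res, ev_res] at this
    exact this
  r := r
  T k := (T k).s
  T_mem k := by intro i j; rw [pow_one]; exact (T k).compat i j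
  T_ne x := by
    obtain ⟨k, hk⟩ := hT _ x (hle _ (hj x))
    exact ⟨k, (isUnit_germ_iff _ _ _).mp hk⟩
  pos x hx := pos_core f d hd hdim L hample r T hT x hx _ (hle _ (hj x))

lemma regular_core {X : Scheme} [AlgebraicGeometry.IsNoetherian X] 
    (L : LineBundle X) {m : ℕ} (V : Fin m → X.Opens) (i : Fin m → L.ι) (hV : ∀ j, IsAffineOpen (V j)) (hle : ∀ j, V j ≤ L.U (i j)) 
    (j : X → Fin m) (hj : ∀ x, x ∈ V (j x)) : ∃ A : Finset X, ∀ n, ∀ F, ∀ hF : F ∈ Sn L n, 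
      (∀ x ∈ A, X.evaluation _ x (hle _ (hj x)) (F (i (j x))) ≠ 0) → (toPow hF).IsRegular := by
  have hN : ∀ jj, IsNoetherianRing Γ(X, V jj) := fun jj => IsLocallyNoetherian.component_noetherian ⟨V jj, hV jj⟩
  have hfin : ∀ jj, Finite (associatedPrimes Γ(X, V jj) Γ(X, V jj)) := fun jj => (associatedPrimes.finite _ _).to_subtype
  choose pt hpt1 hpt2 using fun (jp : Σ jj, associatedPrimes Γ(X, V jj) Γ(X, V jj)) => 
    exists_pt (hV jp.1) jp.2.1 (jp.2.2.isPrime)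
  refine ⟨(Set.finite_range pt).toFinset, ?_⟩
  intro n F hF hA ii x _ hii
  let jj := j x
  have h1 : res X (hle jj) (F (i jj)) ∈ nonZeroDivisors Γ(X, V jj) := by
    by_contra hcon
    have hcon' : res X (hle jj) (F (i jj)) ∈ ((nonZeroDivisors Γ(X, V jj) : Set Γ(X, V jj)))ᶜ := hcon
    rw [← biUnion_associatedPrimes_eq_compl_nonZeroDivisors] at hcon'
    simp only [Set.mem_iUnion] at hcon'
    obtain ⟨P, hP, hm⟩ := hcon'
    have h2 := hA (pt ⟨jj, P, hP⟩) (by simp)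
    have h3 := s_ne hF _ (i jj) _ (hle jj (hpt1 ⟨jj, P, hP⟩)) _ h2
    rw [← ev_res (hle jj) _ _ (hpt1 ⟨jj, P, hP⟩), Scheme.evaluation_ne_zero_iff_mem_basicOpen] at h3
    exact (hpt2 ⟨jj, P, hP⟩ _).mp h3 hm
  have h4 : X.presheaf.germ (V jj) x (hj x) (res X (hle jj) (F (i jj))) ∈ nonZeroDivisors (X.presheaf.stalk x) := by
    let := (X.presheaf.germ (V jj) x (hj x)).hom.toAlgebra
    have : IsLocalization.AtPrime (X.presheaf.stalk x) ((hV jj).primeIdealOf ⟨x, hj x⟩).asIdeal := (hV jj).isLocalization_stalk ⟨x, hj x⟩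
    exact IsLocalization.nonZeroDivisors_le_comap ((hV jj).primeIdealOf ⟨x, hj x⟩).asIdeal.primeCompl (X.presheaf.stalk x) h1
  have hx2 : x ∈ L.U ii ⊓ L.U (i jj) := ⟨hii, hle jj (hj x)⟩
  have hx3 : x ∈ ⊤ ⊓ L.U ii := ⟨trivial, hii⟩
  have h5 : X.presheaf.germ (L.U ii) x hii (F ii) = X.presheaf.germ (L.U ii ⊓ L.U (i jj)) x hx2 (L.g ii (i jj)) ^ n *
      X.presheaf.germ (V jj) x (hj x) (res X (hle jj) (F (i jj))) := by
    have := congrArg (X.presheaf.germ (L.U ii ⊓ L.U (i jj)) x hx2) (hF ii (i jj))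
    rw [map_mul, map_pow, germ_res', germ_res'] at this
    rw [germ_res', this]
  have h6 : X.presheaf.germ (⊤ ⊓ L.U ii) x hx3 (res X inf_le_right (F ii)) ∈ nonZeroDivisors (X.presheaf.stalk x) := by
    rw [germ_res', h5]
    refine mul_mem ?_ h4
    exact pow_mem (((L.isUnit _ _).map (X.presheaf.germ _ x _).hom).mem_nonZeroDivisors) n
  exact h6

lemma unitLocus_open {X : Scheme} {L : LineBundle X} {n : ℕ} {V : X.Opens} (t : L.PowSectionOn n V) : IsOpen t.unitLocus := by
  have : t.unitLocus = ⋃ i, (X.basicOpen (t.s i) : Set X) := by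
    ext x
    rw [Set.mem_iUnion]
    constructor
    · rintro ⟨i, h1, h2, h3⟩
      exact ⟨i, (Scheme.mem_basicOpen _ _ _ _).mpr h3⟩
    · rintro ⟨i, h⟩
      have h1 : x ∈ V ⊓ L.U i := X.basicOpen_le _ h
      exact ⟨i, h1.1, h1.2, (Scheme.mem_basicOpen _ _ _ _).mp h⟩
  rw [this]
  exact isOpen_iUnion fun i => (X.basicOpen _).isOpen

lemma zeroLocus_eq {X : Scheme} {L : LineBundle X} {n : ℕ} (t : L.PowSectionOn n ⊤) : t.zeroLocus = t.unitLocusᶜ := by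
  ext x
  constructor
  · rintro ⟨h1, h2⟩ ⟨i, h3, h4, h5⟩
    exact h2 i h3 h4 h5
  · intro h
    exact ⟨trivial, fun i h1 h2 h3 => h ⟨i, h1, h2, h3⟩⟩

theorem final {X S : Scheme}
    [AlgebraicGeometry.IsNoetherian X] [AlgebraicGeometry.IsNoetherian S] [IsAffine S]
    (f : X ⟶ S) (hproj : IsProjectiveMorphism f) (hsurj : Function.Surjective f.base)
    (d : ℕ) (hd : 1 ≤ d) (hdim : PureRelativeDimension f d)
    (L : LineBundle X)
    (hample : IsRelativelyAmple f L)
    (hgg : ∃ (r : ℕ) (t : Fin r → L.GSection), ∀ (i : L.ι) (x : X) (hx : x ∈ L.U i),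
      ∃ k, IsUnit (X.presheaf.germ (L.U i) x hx ((t k).s i))) :
    ∃ n₀ : ℕ, 0 < n₀ ∧ ∀ n : ℕ, n₀ ≤ n →
      ∃ t : L.PowSectionOn n ⊤,
        t.IsRegular ∧
        ∀ s : S, ∀ C ∈ irreducibleComponents (↥(t.zeroLocus ∩ f.base ⁻¹' {s})),
          topologicalKrullDim (↥C) = ((d - 1 : ℕ) : WithBot ℕ∞) := by
  obtain ⟨hprop, -⟩ := hproj
  obtain ⟨r, T, hT⟩ := hgg
  obtain ⟨m, V, i, hV, hle, hc⟩ := exists_cover L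
  choose j hj using hc
  obtain ⟨A, hA⟩ := regular_core L V i hV hle j hj
  obtain ⟨n₀, hn₀, h⟩ := (mkAv f d hd hdim L hample r T hT V i hV hle j hj).main A
  refine ⟨n₀, hn₀, fun n hn => ?_⟩
  obtain ⟨F, hF, hG, hFA⟩ := h n hn
  have hF : F ∈ Sn L n := hF
  refine ⟨toPow hF, hA n F hF hFA, ?_⟩
  have hloc : ∀ z i (hz : z ∈ (⊤ : X.Opens) ⊓ L.U i), z ∈ (toPow hF).zeroLocus ↔ z ∉ X.basicOpen ((toPow hF).s i) := by
    intro z i hz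
    rw [zeroLocus_eq, Set.mem_compl_iff, mem_unitLocus (toPow hF) z trivial i hz.2]
    exact not_congr (X.evaluation_ne_zero_iff_mem_basicOpen z hz _)
  refine main_dim_X f d hd hdim _ ?_ ?_ ?_
  · rw [zeroLocus_eq]; exact (unitLocus_open _).isClosed_compl
  · intro x hx
    obtain ⟨i, hi⟩ := L.covers x
    exact ⟨⊤ ⊓ L.U i, ⟨trivial, hi⟩, (toPow hF).s i, fun z hz => hloc z i hz⟩
  · intro x hx hxz
    have h1 := hG x hx
    have h2 : X.evaluation _ x (hle _ (hj x)) (F (i (j x))) ≠ 0 := h1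
    rw [hloc x (i (j x)) ⟨trivial, hle _ (hj x)⟩, ← Scheme.evaluation_eq_zero_iff_notMem_basicOpen (U := ⊤ ⊓ L.U (i (j x))) X x ⟨trivial, hle _ (hj x)⟩] at hxz
    apply h2
    rw [← ev_res (inf_le_right : ⊤ ⊓ L.U (i (j x)) ≤ _) _ x ⟨trivial, hle _ (hj x)⟩]
    exact hxz

end P13

/-- Let `f : X → S` be a surjective projective morphism of Noetherian
schemes of pure relative dimension `d ≥ 1` with `S` affine, and let `L` be an `f`-very ample
invertible `O_X`-module (recorded here as: `L` is relatively ample for `f` and generated by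
finitely many global sections).  Then there exists `n₀ > 0` such that for all `n ≥ n₀` there
is a regular global section `s` of `L^{⊗n}` whose zero scheme `Z(s) → S` is of pure relative
dimension `d - 1`. -/
theorem stmt_19 {X S : Scheme}
    [AlgebraicGeometry.IsNoetherian X] [AlgebraicGeometry.IsNoetherian S] [IsAffine S]
    (f : X ⟶ S) (hproj : IsProjectiveMorphism f) (hsurj : Function.Surjective f.base)
    (d : ℕ) (hd : 1 ≤ d) (hdim : PureRelativeDimension f d)
    (L : LineBundle X)
    (hample : IsRelativelyAmple f L)
    (hgg : ∃ (r : ℕ) (t : Fin r → L.GSection), ∀ (i : L.ι) (x : X) (hx : x ∈ L.U i),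
      ∃ k, IsUnit (X.presheaf.germ (L.U i) x hx ((t k).s i))) :
    ∃ n₀ : ℕ, 0 < n₀ ∧ ∀ n : ℕ, n₀ ≤ n →
      ∃ t : L.PowSectionOn n ⊤,
        t.IsRegular ∧
        ∀ s : S, ∀ C ∈ irreducibleComponents (↥(t.zeroLocus ∩ f.base ⁻¹' {s})),
          topologicalKrullDim (↥C) = ((d - 1 : ℕ) : WithBot ℕ∞) := by
  exact final f hproj hsurj d hd hdim L hample hgg
end Paper
end
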